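/- Let A and B be convex polyhedral cones in ℝ³ with apex the origin O and non-empty interior such that A, −B ⊂ {x : x₃ ≥ 0} and A ∩ {x₃ = 0} = B ∩ {x₃ = 0} = {O}. Let S³(A,B) = cl{x ∈ ℝ³ : g_{A,B} fails to be of class C³ at x} and E(A,B) = ⋃{R + T : R is an edge of A and T is an edge of −B}. Then E(A,B) ⊂ S³(A,B) ⊂ ∂A ∪ (−∂B) ∪ E(A,B). -/

import Mathlib

open MeasureTheory Pointwise

/-- The cross covariogram of sets `K, L ⊆ ℝ³`: `g_{K,L}(x) = λ₃(K ∩ (L + x))`. -/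
noncomputable def crossCovariogram (K L : Set (EuclideanSpace ℝ (Fin 3)))
    (x : EuclideanSpace ℝ (Fin 3)) : ℝ :=
  (volume (K ∩ ((x + ·) '' L))).toReal

/-- A convex polyhedral cone with apex the origin: a finite intersection of closed
half-spaces whose boundary planes pass through the origin. -/
def IsPolyhedralCone (C : Set (EuclideanSpace ℝ (Fin 3))) : Prop :=
  ∃ S : Finset (EuclideanSpace ℝ (Fin 3)),
    C = {x | ∀ s ∈ S, @inner ℝ _ _ s x ≤ (0 : ℝ)}

/-- The exposed face of a convex set `Q` in direction `w`. -/
def exposedFace (Q : Set (EuclideanSpace ℝ (Fin 3)))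
    (w : EuclideanSpace ℝ (Fin 3)) : Set (EuclideanSpace ℝ (Fin 3)) :=
  {x ∈ Q | ∀ y ∈ Q, @inner ℝ _ _ w y ≤ @inner ℝ _ _ w x}

/-- `S` is an edge (a one-dimensional exposed face) of `Q`. -/
def IsEdgeOf (Q S : Set (EuclideanSpace ℝ (Fin 3))) : Prop :=
  (∃ w : EuclideanSpace ℝ (Fin 3), w ≠ 0 ∧ S = exposedFace Q w) ∧
    Module.finrank ℝ (vectorSpan ℝ S) = 1

/-- `f` is of class `C³` at `x`: it is three times continuously differentiable on some
neighbourhood of `x`. -/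
def IsC3At (f : EuclideanSpace ℝ (Fin 3) → ℝ) (x : EuclideanSpace ℝ (Fin 3)) : Prop :=
  ∃ U ∈ nhds x, ContDiffOn ℝ 3 f U

namespace CC

abbrev V3 := EuclideanSpace ℝ (Fin 3)

/-- bounded measurable functions -/
def BM (f : V3 → ℝ) : Prop := Measurable f ∧ ∃ M, ∀ x, |f x| ≤ M

theorem BM.mul {f g : V3 → ℝ} (hf : BM f) (hg : BM g) : BM (fun x => f x * g x) := by
  obtain ⟨hf, M, hM⟩ := hf
  obtain ⟨hg, N, hN⟩ := hg
  refine ⟨hf.mul hg, M * N, fun x => ?_⟩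
  rw [abs_mul]
  exact mul_le_mul (hM x) (hN x) (abs_nonneg _) ((abs_nonneg _).trans (hM x))

theorem BM.add {f g : V3 → ℝ} (hf : BM f) (hg : BM g) : BM (fun x => f x + g x) := by
  obtain ⟨hf, M, hM⟩ := hf
  obtain ⟨hg, N, hN⟩ := hg
  exact ⟨hf.add hg, M + N, fun x => (abs_add_le _ _).trans (add_le_add (hM x) (hN x))⟩

theorem BM.const (c : ℝ) : BM (fun _ => c) := ⟨measurable_const, |c|, fun _ => le_rfl⟩

theorem BM.cmul {f : V3 → ℝ} (c : ℝ) (hf : BM f) : BM (fun x => c * f x) := (BM.const c).mul hf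

theorem BM.sub {f g : V3 → ℝ} (hf : BM f) (hg : BM g) : BM (fun x => f x - g x) := by
  have := hf.add (hg.cmul (-1))
  convert this using 2; ring

theorem BM.shift {f : V3 → ℝ} (hf : BM f) (a : V3) : BM (fun x => f (x - a)) := by
  obtain ⟨hf, M, hM⟩ := hf
  exact ⟨hf.comp (measurable_id.sub_const a), M, fun x => hM _⟩

theorem BM.refl {f : V3 → ℝ} (hf : BM f) (a : V3) : BM (fun x => f (a - x)) := by
  obtain ⟨hf, M, hM⟩ := hf
  exact ⟨hf.comp (measurable_id.const_sub a), M, fun x => hM _⟩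

theorem BM.ind {s : Set V3} (hs : MeasurableSet s) : BM (s.indicator fun _ => 1) := by
  refine ⟨measurable_const.indicator hs, 1, fun x => ?_⟩
  by_cases h : x ∈ s <;> simp [h]

/-- localised convolution -/
noncomputable def W (φ f h : V3 → ℝ) (x : V3) : ℝ := ∫ p, φ p * (f p * h (x - p))

theorem hcs_of {φ : V3 → ℝ} {y : V3} {δ : ℝ} (h : tsupport φ ⊆ Metric.ball y δ) :
    HasCompactSupport φ :=
  Metric.isCompact_of_isClosed_isBounded (isClosed_tsupport φ) (Metric.isBounded_ball.subset h)

theorem integrable_mul {φ f : V3 → ℝ} (hφ : Continuous φ) (hs : HasCompactSupport φ) (hf : BM f) :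
    Integrable (fun p => φ p * f p) := by
  obtain ⟨hf, M, hM⟩ := hf
  exact (hφ.integrable_of_hasCompactSupport hs).mul_bdd (c := M) hf.aestronglyMeasurable
    (Filter.Eventually.of_forall fun x => by simpa using hM x)

theorem W_integrable {φ f h : V3 → ℝ} (hφ : Continuous φ) (hs : HasCompactSupport φ)
    (hf : BM f) (hh : BM h) (x : V3) : Integrable (fun p => φ p * (f p * h (x - p))) :=
  integrable_mul hφ hs (hf.mul (hh.refl x))

/-- local invariance near `y` under small translations in `L` -/
def LocInv (f : V3 → ℝ) (y : V3) (L : Submodule ℝ V3) : Prop :=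
  ∃ δ > 0, ∀ p v, dist p y < δ → v ∈ L → ‖v‖ < δ → f (p + v) = f p

def LocAll (𝒞 : (V3 → ℝ) → Prop) (f h : V3 → ℝ) (y : V3) : Prop :=
  ∃ δ > 0, ∀ φ : V3 → ℝ, ContDiff ℝ 3 φ → (∀ p, 0 ≤ φ p) → tsupport φ ⊆ Metric.ball y δ →
    𝒞 (W φ f h)

def CS (x0 : V3) (F : V3 → ℝ) : Prop := ContDiffAt ℝ 3 F x0

def CG (ε : ℝ) (σ : V3 → ℝ) (x0 : V3) (F : V3 → ℝ) : Prop :=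
  ∃ G : V3 → ℝ, (∀ x, 0 ≤ G x) ∧ (∀ x, σ x < 0 → G x = 0) ∧
    ContDiffAt ℝ 3 (fun x => F x - ε * G x) x0

structure Cls (x0 : V3) (𝒞 : (V3 → ℝ) → Prop) : Prop where
  zero : 𝒞 (fun _ => 0)
  add : ∀ F G, 𝒞 F → 𝒞 G → 𝒞 (fun x => F x + G x)
  congr : ∀ F G, F =ᶠ[nhds x0] G → 𝒞 F → 𝒞 G

theorem Cls_CS (x0 : V3) : Cls x0 (CS x0) where
  zero := contDiffAt_const
  add _ _ hF hG := ContDiffAt.add hF hG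
  congr _ _ h hF := ContDiffAt.congr_of_eventuallyEq hF h.symm

theorem CG_of_CS {ε σ x0 F} (h : CS x0 F) : CG ε σ x0 F :=
  ⟨fun _ => 0, fun _ => le_rfl, fun _ _ => rfl, by simpa [CS] using h⟩

theorem Cls_CG (ε : ℝ) (σ : V3 → ℝ) (x0 : V3) : Cls x0 (CG ε σ x0) where
  zero := CG_of_CS contDiffAt_const
  add F F' := by
    rintro ⟨G, h1, h2, h3⟩ ⟨G', h1', h2', h3'⟩
    refine ⟨fun x => G x + G' x, fun x => add_nonneg (h1 x) (h1' x),
      fun x hx => by simp [h2 x hx, h2' x hx], ?_⟩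
    convert h3.add h3' using 2
    ring
  congr F F' h := by
    rintro ⟨G, h1, h2, h3⟩
    refine ⟨G, h1, h2, h3.congr_of_eventuallyEq ?_⟩
    filter_upwards [h] with x hx
    rw [hx]

theorem LocAll.mono {𝒞 𝒟 : (V3 → ℝ) → Prop} (hc : ∀ F, 𝒞 F → 𝒟 F) {f h y}
    (H : LocAll 𝒞 f h y) : LocAll 𝒟 f h y := by
  obtain ⟨δ, hδ, H⟩ := H
  exact ⟨δ, hδ, fun φ a b c => hc _ (H φ a b c)⟩

theorem LocAll.add_left {x0 𝒞} (hc : Cls x0 𝒞) {f1 f2 h : V3 → ℝ} {y : V3} (h1 : BM f1)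
    (h2 : BM f2) (hh : BM h) (H1 : LocAll 𝒞 f1 h y) (H2 : LocAll 𝒞 f2 h y) :
    LocAll 𝒞 (fun p => f1 p + f2 p) h y := by
  obtain ⟨δ1, hδ1, H1⟩ := H1
  obtain ⟨δ2, hδ2, H2⟩ := H2
  refine ⟨min δ1 δ2, lt_min hδ1 hδ2, fun φ a b c => ?_⟩
  have := hc.add _ _ (H1 φ a b (c.trans (Metric.ball_subset_ball (min_le_left _ _))))
    (H2 φ a b (c.trans (Metric.ball_subset_ball (min_le_right _ _))))
  convert this using 2 with x
  have hs := hcs_of c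
  unfold W
  rw [← integral_add (W_integrable a.continuous hs h1 hh x) (W_integrable a.continuous hs h2 hh x)]
  congr 1; ext p; ring

theorem LocAll.add_right {x0 𝒞} (hc : Cls x0 𝒞) {f h1 h2 : V3 → ℝ} {y : V3} (h1' : BM h1)
    (h2' : BM h2) (hf : BM f) (H1 : LocAll 𝒞 f h1 y) (H2 : LocAll 𝒞 f h2 y) :
    LocAll 𝒞 f (fun p => h1 p + h2 p) y := by
  obtain ⟨δ1, hδ1, H1⟩ := H1
  obtain ⟨δ2, hδ2, H2⟩ := H2
  refine ⟨min δ1 δ2, lt_min hδ1 hδ2, fun φ a b c => ?_⟩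
  have := hc.add _ _ (H1 φ a b (c.trans (Metric.ball_subset_ball (min_le_left _ _))))
    (H2 φ a b (c.trans (Metric.ball_subset_ball (min_le_right _ _))))
  convert this using 2 with x
  have hs := hcs_of c
  unfold W
  rw [← integral_add (W_integrable a.continuous hs hf h1' x)
    (W_integrable a.continuous hs hf h2' x)]
  congr 1; ext p; ring

theorem LocAll.smul {x0 : V3} {f h : V3 → ℝ} {y : V3} (c d : ℝ)
    (H1 : LocAll (CS x0) f h y) : LocAll (CS x0) (fun p => c * f p) (fun p => d * h p) y := by
  obtain ⟨δ1, hδ1, H1⟩ := H1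
  refine ⟨δ1, hδ1, fun φ a b e => ?_⟩
  have : CS x0 (fun x => c * d * W φ f h x) := contDiffAt_const.mul (H1 φ a b e)
  convert this using 2 with x
  unfold W
  rw [← integral_const_mul]
  congr 1; ext p; ring

theorem LocAll.congr {x0 𝒞} (hc : Cls x0 𝒞) {f h f' h' : V3 → ℝ} {y z : V3} (hyz : y + z = x0)
    (hf : f =ᶠ[nhds y] f') (hh : h =ᶠ[nhds z] h') (H : LocAll 𝒞 f h y) : LocAll 𝒞 f' h' y := by
  obtain ⟨δ, hδ, H⟩ := H
  obtain ⟨δ1, hδ1, hf⟩ := Metric.eventually_nhds_iff.1 hf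
  obtain ⟨δ2, hδ2, hh⟩ := Metric.eventually_nhds_iff.1 hh
  refine ⟨min δ (min δ1 (δ2 / 2)), by positivity, fun φ a b c => ?_⟩
  refine hc.congr _ _ ?_ (H φ a b (c.trans (Metric.ball_subset_ball (min_le_left _ _))))
  filter_upwards [Metric.ball_mem_nhds x0 (half_pos hδ2)] with x hx
  unfold W
  congr 1; ext p
  by_cases hp : φ p = 0
  · simp [hp]
  have hp' : p ∈ Metric.ball y (min δ (min δ1 (δ2 / 2))) := c (subset_tsupport _ hp)
  simp only [Metric.mem_ball, lt_min_iff] at hp'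
  rw [hf hp'.2.1, hh]
  rw [Metric.mem_ball] at hx
  have h2 : dist (x - p) z ≤ dist x x0 + dist p y := by
    rw [dist_eq_norm, dist_eq_norm, dist_eq_norm, ← hyz]
    calc ‖x - p - z‖ = ‖(x - (y + z)) - (p - y)‖ := by congr 1; abel
      _ ≤ _ := norm_sub_le _ _
  linarith [hp'.2.2]

theorem exists_proj {L1 L2 : Submodule ℝ V3} (h : L1 ⊔ L2 = ⊤) :
    ∃ P : V3 →L[ℝ] V3, ∀ u, P u ∈ L1 ∧ u - P u ∈ L2 := by
  have key : ∀ x : V3, ∃ a ∈ L1, x - a ∈ L2 := by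
    intro x
    have hx : x ∈ L1 ⊔ L2 := by rw [h]; trivial
    obtain ⟨a, ha, b, hb, rfl⟩ := Submodule.mem_sup.1 hx
    exact ⟨a, ha, by simpa using hb⟩
  choose a ha hb using key
  let b := (EuclideanSpace.basisFun (Fin 3) ℝ).toBasis
  refine ⟨LinearMap.toContinuousLinearMap (b.constr ℝ fun i => a (b i)), fun u => ?_⟩
  have h1 : (LinearMap.toContinuousLinearMap (b.constr ℝ fun i => a (b i))) u
    = ∑ i, b.repr u i • a (b i) := by
    simp [Module.Basis.constr_apply_fintype]
  have h2 : u = ∑ i, b.repr u i • b i := (b.sum_repr u).symm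
  rw [h1]
  refine ⟨Submodule.sum_mem _ fun i _ => Submodule.smul_mem _ _ (ha _), ?_⟩
  have : u - ∑ i, b.repr u i • a (b i) = ∑ i, b.repr u i • (b i - a (b i)) := by
    simp only [smul_sub, Finset.sum_sub_distrib]
    rw [← h2]
  rw [this]
  exact Submodule.sum_mem _ fun i _ => Submodule.smul_mem _ _ (hb _)

theorem contDiff_shift {φ F : V3 → ℝ} (hφ : ContDiff ℝ 3 φ) (hs : HasCompactSupport φ)
    (hF : BM F) : ContDiff ℝ 3 (fun v => ∫ q, φ (q + v) * F q) := by
  have hloc : LocallyIntegrable F volume := by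
    obtain ⟨hf, M, hM⟩ := hF
    refine (locallyIntegrable_const M).mono hf.aestronglyMeasurable (Filter.Eventually.of_forall fun x => ?_)
    rw [Real.norm_eq_abs, Real.norm_eq_abs]
    exact (hM x).trans (le_abs_self M)
  have h1 : HasCompactSupport (fun x => φ (-x)) := by
    simpa [Function.comp_def] using hs.comp_homeomorph (Homeomorph.neg V3)
  have h2 : ContDiff ℝ (3 : ℕ∞) (fun x => φ (-x)) := hφ.comp contDiff_neg
  have h3 := h1.contDiff_convolution_right (ContinuousLinearMap.mul ℝ ℝ) hloc h2
  have h4 : ContDiff ℝ 3 (fun v : V3 => (convolution F (fun x => φ (-x))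
    (ContinuousLinearMap.mul ℝ ℝ) volume) (-v)) := h3.comp contDiff_neg
  convert h4 using 2 with v
  unfold convolution
  congr 1; ext q
  simp [mul_comm, add_comm]

theorem lemmaB {f h : V3 → ℝ} (hf : BM f) (hh : BM h) {y z x0 : V3} {L1 L2 : Submodule ℝ V3}
    (h1 : LocInv f y L1) (h2 : LocInv h z L2) (hyz : y + z = x0) (hL : L1 ⊔ L2 = ⊤) :
    LocAll (CS x0) f h y := by
  obtain ⟨δ1, hδ1, h1⟩ := h1
  obtain ⟨δ2, hδ2, h2⟩ := h2
  obtain ⟨P, hP⟩ := exists_proj hL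
  set δ := min δ1 δ2 with hδdef
  have hδ : 0 < δ := lt_min hδ1 hδ2
  refine ⟨δ / 2, by positivity, fun φ a _ c => ?_⟩
  have hs := hcs_of c
  have key := (contDiff_shift a hs (hf.mul (hh.refl x0)))
  have key2 : ContDiff ℝ 3 (fun x => ∫ q, φ (q + P (x - x0)) * (f q * h (x0 - q))) :=
    key.comp (P.contDiff.comp (contDiff_id.sub contDiff_const))
  refine (key2.contDiffAt (x := x0)).congr_of_eventuallyEq ?_
  have c1 : Filter.Tendsto (fun x => P (x - x0)) (nhds x0) (nhds 0) := by
    have : Continuous fun x => P (x - x0) := by fun_prop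
    simpa using this.tendsto x0
  have c2 : Filter.Tendsto (fun x => (x - x0) - P (x - x0)) (nhds x0) (nhds 0) := by
    have : Continuous fun x => (x - x0) - P (x - x0) := by fun_prop
    simpa using this.tendsto x0
  have e1 := c1.eventually (Metric.ball_mem_nhds 0 (half_pos hδ))
  have e2 := c2.eventually (Metric.ball_mem_nhds 0 (half_pos hδ))
  filter_upwards [e1, e2] with x hx1 hx2
  replace hx1 : ‖P (x - x0)‖ < δ / 2 := mem_ball_zero_iff.1 hx1
  replace hx2 : ‖(x - x0) - P (x - x0)‖ < δ / 2 := mem_ball_zero_iff.1 hx2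
  unfold W
  rw [← integral_add_right_eq_self (fun p => φ p * (f p * h (x - p))) (P (x - x0))]
  congr 1; ext q
  by_cases hp : φ (q + P (x - x0)) = 0
  · simp only [hp, zero_mul]
  have hq : q + P (x - x0) ∈ Metric.ball y (δ / 2) := c (subset_tsupport _ hp)
  have hq2 : dist q y < δ := by
    rw [Metric.mem_ball, dist_eq_norm] at hq
    rw [dist_eq_norm]
    calc ‖q - y‖ = ‖(q + P (x - x0) - y) - P (x - x0)‖ := by congr 1; abel
      _ ≤ _ := norm_sub_le _ _
      _ < δ := by linarith
  rw [h1 q _ (hq2.trans_le (min_le_left _ _)) (hP _).1 (by linarith [min_le_left δ1 δ2])]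
  have e : x - (q + P (x - x0)) = (x0 - q) + ((x - x0) - P (x - x0)) := by abel
  rw [e, h2 (x0 - q) _ _ (hP _).2 (by linarith [min_le_right δ1 δ2])]
  have : dist (x0 - q) z = dist q y := by
    rw [dist_eq_norm, dist_eq_norm, ← hyz, ← norm_neg]; congr 1; abel
  rw [this]
  exact hq2.trans_le (min_le_right _ _)

theorem W_finsum {ι : Type} (t : Finset ι) {x0 𝒞} (hc : Cls x0 𝒞)
    (F : ι → V3 → ℝ) (h : ∀ i ∈ t, 𝒞 (F i)) : 𝒞 (fun x => ∑ i ∈ t, F i x) := by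
  classical
  induction t using Finset.induction_on with
  | empty => simpa using hc.zero
  | insert a s ha ih =>
    simp only [Finset.sum_insert ha]
    exact hc.add _ _ (h a (by simp)) (ih fun i hi => h i (by simp [hi]))

open scoped Manifold ContDiff in
theorem glue {x0 𝒞} (hc : Cls x0 𝒞) {f h : V3 → ℝ} (hf : BM f) (hh : BM h) (R0 : ℝ)
    (hsupp : ∀ᶠ x in nhds x0, ∀ p, f p * h (x - p) ≠ 0 → ‖p‖ ≤ R0)
    (hloc : ∀ y, LocAll 𝒞 f h y) (χ : V3 → ℝ) (hχ : ContDiff ℝ 3 χ) (hχ0 : ∀ p, 0 ≤ χ p) :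
    𝒞 (W χ f h) := by
  choose δ hδ H using hloc
  obtain ⟨t, ht⟩ := (isCompact_closedBall (0 : V3) R0).elim_finite_subcover
    (fun y => Metric.ball y (δ y)) (fun y => Metric.isOpen_ball)
    (fun y _ => Set.mem_iUnion.2 ⟨y, Metric.mem_ball_self (hδ y)⟩)
  obtain ⟨ρ, hρ⟩ := SmoothPartitionOfUnity.exists_isSubordinate 𝓘(ℝ, V3)
    (s := Metric.closedBall (0 : V3) R0) Metric.isClosed_closedBall
    (fun y : t => Metric.ball (y : V3) (δ y)) (fun y => Metric.isOpen_ball)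
    (by
      intro p hp
      obtain ⟨y, hy, hp⟩ := Set.mem_iUnion₂.1 (ht hp)
      exact Set.mem_iUnion.2 ⟨⟨y, hy⟩, hp⟩)
  have hsm : ∀ i, ContDiff ℝ 3 (ρ i) := fun i =>
    ((ρ i).contMDiff.contDiff).of_le (by
      rw [show (3 : WithTop ℕ∞) = ((3 : ℕ∞) : WithTop ℕ∞) from rfl]
      exact WithTop.coe_le_coe.2 le_top)
  have hts : ∀ i : t, tsupport (fun p => χ p * ρ i p) ⊆ Metric.ball (i : V3) (δ i) := fun i =>
    (tsupport_mul_subset_right (f := χ) (g := ρ i)).trans (hρ i)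
  have hs := W_finsum (Finset.univ : Finset t) hc
    (fun i => W (fun p => χ p * ρ i p) f h)
    (fun i _ => H i _ (hχ.mul (hsm i)) (fun p => mul_nonneg (hχ0 p) (ρ.nonneg i p)) (hts i))
  refine hc.congr _ _ ?_ hs
  filter_upwards [hsupp] with x hx
  unfold W
  rw [← integral_finsetSum]
  · congr 1; ext p
    rw [← Finset.sum_mul, ← Finset.mul_sum]
    by_cases h0 : f p * h (x - p) = 0
    · simp [h0]
    · have := ρ.sum_eq_one (x := p) (by simpa using hx p h0)
      rw [finsum_eq_sum_of_fintype] at this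
      rw [this, mul_one]
  · intro i _
    exact W_integrable (hχ.mul (hsm i)).continuous (hcs_of (hts i)) hf hh x

end CC

namespace CC

open scoped InnerProductSpace

def cone (S : Finset V3) : Set V3 := {x | ∀ s ∈ S, ⟪s, x⟫_ℝ ≤ (0 : ℝ)}

open Classical in
noncomputable def act (S : Finset V3) (y : V3) : Finset V3 := S.filter fun s => ⟪s, y⟫_ℝ = (0 : ℝ)

def LS (I : Finset V3) : Submodule ℝ V3 where
  carrier := {v | ∀ s ∈ I, ⟪s, v⟫_ℝ = (0 : ℝ)}
  add_mem' := by
    intro a b ha hb s hs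
    rw [inner_add_right, ha s hs, hb s hs, add_zero]
  zero_mem' := by intro s _; simp
  smul_mem' := by
    intro c a ha s hs
    rw [inner_smul_right, ha s hs, mul_zero]

theorem mem_LS {I : Finset V3} {v : V3} : v ∈ LS I ↔ ∀ s ∈ I, ⟪s, v⟫_ℝ = (0 : ℝ) := Iff.rfl

theorem mem_act {S : Finset V3} {y s : V3} : s ∈ act S y ↔ s ∈ S ∧ ⟪s, y⟫_ℝ = (0 : ℝ) := by
  classical
  simp [act]

noncomputable def ind (X : Set V3) : V3 → ℝ := X.indicator fun _ => 1

theorem ind_of_mem {X : Set V3} {p : V3} (h : p ∈ X) : ind X p = 1 := by simp [ind, h]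
theorem ind_of_not_mem {X : Set V3} {p : V3} (h : p ∉ X) : ind X p = 0 := by simp [ind, h]
theorem ind_nonneg {X : Set V3} (p : V3) : 0 ≤ ind X p := by
  by_cases h : p ∈ X
  · simp [ind_of_mem h]
  · simp [ind_of_not_mem h]
theorem ind_congr {X Y : Set V3} {p q : V3} (h : p ∈ X ↔ q ∈ Y) : ind X p = ind Y q := by
  by_cases h' : p ∈ X
  · rw [ind_of_mem h', ind_of_mem (h.1 h')]
  · rw [ind_of_not_mem h', ind_of_not_mem (fun h2 => h' (h.2 h2))]
theorem ind_ne {X : Set V3} {p : V3} (h : ind X p ≠ 0) : p ∈ X := by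
  by_contra h'
  exact h (ind_of_not_mem h')

structure GC (S : Finset V3) : Prop where
  int : ∃ p0 : V3, ∀ s ∈ S, ⟪s, p0⟫_ℝ < (0 : ℝ)
  pos : ∀ x ∈ cone S, x ≠ 0 → 0 < x 2

theorem isClosed_cone (S : Finset V3) : IsClosed (cone S) := by
  have : cone S = ⋂ s ∈ S, {x | ⟪s, x⟫_ℝ ≤ (0 : ℝ)} := by ext; simp [cone]
  rw [this]
  refine isClosed_biInter fun s _ => isClosed_le (by fun_prop) continuous_const

theorem BM_ind_cone (S : Finset V3) : BM (ind (cone S)) :=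
  BM.ind (isClosed_cone S).measurableSet

theorem cone_smul {S : Finset V3} {x : V3} (hx : x ∈ cone S) {c : ℝ} (hc : 0 ≤ c) :
    c • x ∈ cone S := fun s hs => by
  rw [inner_smul_right]; exact mul_nonpos_of_nonneg_of_nonpos hc (hx s hs)

theorem cone_add {S : Finset V3} {x y : V3} (hx : x ∈ cone S) (hy : y ∈ cone S) :
    x + y ∈ cone S := fun s hs => by
  rw [inner_add_right]; exact add_nonpos (hx s hs) (hy s hs)

theorem zero_mem_cone (S : Finset V3) : (0 : V3) ∈ cone S := fun s _ => by simp

theorem cone_sub_act (S : Finset V3) (y : V3) : cone S ⊆ cone (act S y) :=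
  fun _ hp s hs => hp s (mem_act.1 hs).1

theorem self_mem_LS (S : Finset V3) (y : V3) : y ∈ LS (act S y) :=
  fun _ hs => (mem_act.1 hs).2

theorem cone_add_LS {I : Finset V3} {v : V3} (hv : v ∈ LS I) (p : V3) :
    p + v ∈ cone I ↔ p ∈ cone I := by
  refine forall₂_congr fun s hs => ?_
  rw [inner_add_right, hv s hs, add_zero]

theorem act_smul (S : Finset V3) (y : V3) {c : ℝ} (hc : c ≠ 0) : act S (c • y) = act S y := by
  ext s; simp [mem_act, inner_smul_right, hc]

theorem eventually_cone {S : Finset V3} {y : V3} (hy : y ∈ cone S) :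
    ∀ᶠ p in nhds y, (p ∈ cone S ↔ p ∈ cone (act S y)) := by
  have : ∀ s ∈ S, ∀ᶠ p in nhds y, ⟪s, y⟫_ℝ = (0 : ℝ) ∨ ⟪s, p⟫_ℝ < (0 : ℝ) := by
    intro s hs
    rcases (hy s hs).eq_or_lt with h | h
    · exact Filter.Eventually.of_forall fun _ => Or.inl h
    · have hc : Continuous fun p : V3 => ⟪s, p⟫_ℝ := by fun_prop
      filter_upwards [(hc.tendsto y).eventually (gt_mem_nhds h)] with p hp
      exact Or.inr hp
  filter_upwards [(Filter.eventually_all_finset S).2 this] with p hp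
  refine ⟨fun h => cone_sub_act S y h, fun h s hs => ?_⟩
  rcases hp s hs with h' | h'
  · exact h s (mem_act.2 ⟨hs, h'⟩)
  · exact h'.le

theorem eventually_not_cone {S : Finset V3} {y : V3} (hy : y ∉ cone S) :
    ∀ᶠ p in nhds y, p ∉ cone S := (isClosed_cone S).isOpen_compl.mem_nhds hy

theorem small_move {S : Finset V3} {y v : V3} (hy : y ∈ cone S)
    (hv : ∀ s ∈ act S y, ⟪s, v⟫_ℝ ≤ (0 : ℝ)) : ∃ δ > 0, ∀ t : ℝ, 0 ≤ t → t < δ → y + t • v ∈ cone S := by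
  have hc : Continuous fun t : ℝ => y + t • v := by fun_prop
  have h := (hc.tendsto' 0 y (by simp)).eventually (eventually_cone hy)
  obtain ⟨δ, hδ, h⟩ := Metric.eventually_nhds_iff.1 h
  refine ⟨δ, hδ, fun t h0 ht => (h (by simpa [abs_of_nonneg h0] using ht)).2 fun s hs => ?_⟩
  rw [inner_add_right, inner_smul_right, (mem_act.1 hs).2, zero_add]
  exact mul_nonpos_of_nonneg_of_nonpos h0 (hv s hs)

theorem LocInv_of {f g : V3 → ℝ} {y : V3} {L : Submodule ℝ V3} (h : f =ᶠ[nhds y] g)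
    (hg : ∀ p, ∀ v ∈ L, g (p + v) = g p) : LocInv f y L := by
  obtain ⟨δ, hδ, h⟩ := Metric.eventually_nhds_iff.1 h
  refine ⟨δ / 2, half_pos hδ, fun p v hp hv hn => ?_⟩
  rw [h, h (hp.trans (half_lt_self hδ)), hg p v hv]
  rw [dist_eq_norm] at hp ⊢
  calc ‖p + v - y‖ = ‖(p - y) + v‖ := by congr 1; abel
    _ ≤ _ := norm_add_le _ _
    _ < δ := by linarith

theorem ind_inv {I : Finset V3} (p : V3) (v : V3) (hv : v ∈ LS I) :
    ind (cone I) (p + v) = ind (cone I) p := ind_congr (cone_add_LS hv p)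

theorem ev_ind {S : Finset V3} {y : V3} (hy : y ∈ cone S) :
    ind (cone S) =ᶠ[nhds y] ind (cone (act S y)) := by
  filter_upwards [eventually_cone hy] with p hp
  exact ind_congr hp

theorem ev_ind_not {S : Finset V3} {y : V3} (hy : y ∉ cone S) :
    ind (cone S) =ᶠ[nhds y] fun _ => 0 := by
  filter_upwards [eventually_not_cone hy] with p hp
  exact ind_of_not_mem hp

theorem LocInv_mem {S : Finset V3} {y : V3} (hy : y ∈ cone S) :
    LocInv (ind (cone S)) y (LS (act S y)) := LocInv_of (ev_ind hy) ind_inv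

theorem LocInv_not {S : Finset V3} {y : V3} (hy : y ∉ cone S) :
    LocInv (ind (cone S)) y ⊤ := LocInv_of (ev_ind_not hy) fun _ _ _ => rfl

def EdgeVec (S : Finset V3) (y : V3) : Prop :=
  y ∈ cone S ∧ y ≠ 0 ∧ LS (act S y) = Submodule.span ℝ {y}

theorem EdgeVec.smul {S : Finset V3} {y : V3} (h : EdgeVec S y) {c : ℝ} (hc : 0 < c) :
    EdgeVec S (c • y) := by
  refine ⟨cone_smul h.1 hc.le, smul_ne_zero hc.ne' h.2.1, ?_⟩
  rw [act_smul S y hc.ne', h.2.2, Submodule.span_singleton_smul_eq (IsUnit.mk0 c hc.ne')]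

theorem frontier_of_act {S : Finset V3} (hS : GC S) {x s : V3} (hx : x ∈ cone S)
    (hs : s ∈ act S x) : x ∈ frontier (cone S) := by
  rw [(isClosed_cone S).frontier_eq]
  refine ⟨hx, fun hi => ?_⟩
  obtain ⟨p0, hp0⟩ := hS.int
  have hc : Continuous fun t : ℝ => x + t • s := by fun_prop
  have h := (hc.tendsto' 0 x (by simp)).eventually (mem_interior_iff_mem_nhds.1 hi)
  obtain ⟨δ, hδ, h⟩ := Metric.eventually_nhds_iff.1 h
  have h1 := @h (δ / 2) (by simp [abs_of_pos hδ, hδ]) s (mem_act.1 hs).1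
  rw [inner_add_right, inner_smul_right, (mem_act.1 hs).2, zero_add,
    real_inner_self_eq_norm_sq] at h1
  have : s ≠ 0 := by
    rintro rfl
    simpa using hp0 _ (mem_act.1 hs).1
  have : 0 < ‖s‖ := norm_pos_iff.2 this
  have : 0 < δ / 2 * ‖s‖ ^ 2 := by positivity
  linarith

theorem exit_lemma {S : Finset V3} {y z : V3} (hy : y ∈ cone S) {l0 : ℝ} (hl0 : 0 < l0)
    (hz : y + l0 • z ∉ cone S) : ∃ l : ℝ, 0 ≤ l ∧ l < l0 ∧ y + l • z ∈ cone S ∧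
      ∃ s ∈ act S (y + l • z), 0 < ⟪s, z⟫_ℝ := by
  classical
  have : ∃ s ∈ S, 0 < ⟪s, y + l0 • z⟫_ℝ := by
    simpa [cone] using hz
  obtain ⟨s0, hs0, h0⟩ := this
  rw [inner_add_right, inner_smul_right] at h0
  have h1 : 0 < ⟪s0, z⟫_ℝ := by
    have := hy s0 hs0
    by_contra h
    nlinarith [not_lt.1 h]
  obtain ⟨s, hs, hmin⟩ := Finset.exists_min_image (S.filter fun s => 0 < ⟪s, z⟫_ℝ)
    (fun s => -⟪s, y⟫_ℝ / ⟪s, z⟫_ℝ) ⟨s0, by simp [hs0, h1]⟩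
  simp only [Finset.mem_filter] at hs hmin
  refine ⟨-⟪s, y⟫_ℝ / ⟪s, z⟫_ℝ, div_nonneg (by linarith [hy s hs.1]) hs.2.le, ?_, ?_, s, ?_, hs.2⟩
  · refine (hmin s0 ⟨hs0, h1⟩).trans_lt ?_
    rw [div_lt_iff₀ h1]; linarith
  · intro q hq
    rw [inner_add_right, inner_smul_right]
    by_cases hqz : 0 < ⟪q, z⟫_ℝ
    · have := hmin q ⟨hq, hqz⟩
      rw [le_div_iff₀ hqz] at this
      linarith
    · have h2 := hy q hq
      have h3 : 0 ≤ -⟪s, y⟫_ℝ / ⟪s, z⟫_ℝ := div_nonneg (by linarith [hy s hs.1]) hs.2.le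
      nlinarith [not_lt.1 hqz]
  · rw [mem_act, inner_add_right, inner_smul_right]
    refine ⟨hs.1, ?_⟩
    field_simp [hs.2.ne']
    ring

theorem LS_exit_le {S : Finset V3} {y z : V3} (hz : z ∈ LS (act S y)) (l : ℝ) :
    LS (act S (y + l • z)) ≤ LS (act S y) := by
  intro v hv s hs
  refine hv s (mem_act.2 ⟨(mem_act.1 hs).1, ?_⟩)
  rw [inner_add_right, inner_smul_right, hz s hs, (mem_act.1 hs).2]; simp

instance : Fact (Module.finrank ℝ V3 = 2 + 1) := ⟨by simp⟩

/-- planes -/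
def pl (n : V3) : Submodule ℝ V3 := LS {n}

theorem mem_pl {n v : V3} : v ∈ pl n ↔ ⟪n, v⟫_ℝ = (0 : ℝ) := by simp [pl, mem_LS]

theorem finrank_pl {n : V3} (hn : n ≠ 0) : Module.finrank ℝ (pl n) = 2 := by
  have : pl n = (Submodule.span ℝ {n})ᗮ := by
    ext v; rw [mem_pl, Submodule.mem_orthogonal_singleton_iff_inner_right]
  rw [this]
  exact Submodule.finrank_orthogonal_span_singleton hn

theorem dichotomy {n y : V3} (hn : n ≠ 0) {L : Submodule ℝ V3} (hL : L ≤ pl n) (hy : y ∈ L)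
    (hy0 : y ≠ 0) : L = Submodule.span ℝ {y} ∨ L = pl n := by
  have h1 : Submodule.span ℝ {y} ≤ L := by simpa using hy
  by_cases h : 2 ≤ Module.finrank ℝ L
  · right
    exact Submodule.eq_of_le_of_finrank_le hL (by rw [finrank_pl hn]; exact h)
  · left
    refine (Submodule.eq_of_le_of_finrank_le h1 ?_).symm
    rw [finrank_span_singleton hy0]; omega

theorem exists_normal {L : Submodule ℝ V3} (h : L ≠ ⊤) : ∃ n : V3, n ≠ 0 ∧ L ≤ pl n := by
  have : Lᗮ ≠ ⊥ := by
    intro h'; exact h ((Submodule.orthogonal_eq_bot_iff).1 h')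
  obtain ⟨n, hn, hn0⟩ := Submodule.exists_mem_ne_zero_of_ne_bot this
  exact ⟨n, hn0, fun v hv => mem_pl.2 (Submodule.inner_left_of_mem_orthogonal hv hn)⟩

theorem act_nonempty {S : Finset V3} {y : V3} (h : LS (act S y) ≠ ⊤) : ∃ s, s ∈ act S y := by
  by_contra h'
  push Not at h'
  exact h (eq_top_iff.2 fun v _ s hs => absurd hs (h' s))

theorem pl_ne_top {n : V3} (hn : n ≠ 0) : pl n ≠ ⊤ := by
  intro h
  have h1 := finrank_pl hn
  rw [h, finrank_top] at h1
  simp at h1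

theorem exit_step {S : Finset V3} (hS : GC S) {n y z : V3} (hn : n ≠ 0) (hy : y ∈ cone S)
    (hy0 : y ≠ 0) (hL : LS (act S y) ≤ pl n) (hz : z ∈ pl n) (hz2 : 0 < z 2)
    (hf : y + z ∉ frontier (cone S)) : ∃ l : ℝ, 0 ≤ l ∧ l < 1 ∧ EdgeVec S (y + l • z) := by
  rcases dichotomy hn hL (self_mem_LS S y) hy0 with h | h
  · exact ⟨0, le_rfl, one_pos, by simpa using ⟨hy, hy0, h⟩⟩
  have hzL : z ∈ LS (act S y) := by rw [h]; exact hz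
  by_cases hx : y + z ∈ cone S
  · exfalso
    obtain ⟨s, hs⟩ := act_nonempty (S := S) (y := y) (by rw [h]; exact pl_ne_top hn)
    refine hf (frontier_of_act hS hx (s := s) (mem_act.2 ⟨(mem_act.1 hs).1, ?_⟩))
    rw [inner_add_right, hzL s hs, (mem_act.1 hs).2, add_zero]
  · obtain ⟨l, hl0, hl1, hm, s, hs, hsz⟩ := exit_lemma (z := z) hy one_pos (by simpa using hx)
    refine ⟨l, hl0, hl1, hm, ?_, ?_⟩
    · intro h0
      have := congrArg (fun v : V3 => v 2) h0
      simp at this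
      nlinarith [hS.pos y hy hy0, mul_nonneg hl0 hz2.le]
    · have hle : LS (act S (y + l • z)) ≤ pl n := (LS_exit_le hzL l).trans hL
      have hne : y + l • z ≠ 0 := by
        intro h0
        have := congrArg (fun v : V3 => v 2) h0
        simp at this
        nlinarith [hS.pos y hy hy0, mul_nonneg hl0 hz2.le]
      rcases dichotomy hn hle (self_mem_LS S _) hne with h' | h'
      · exact h'
      · exfalso
        have : z ∈ LS (act S (y + l • z)) := by rw [h']; exact hz
        linarith [this s hs]

theorem outer_top {S T : Finset V3} (hS : GC S) (hT : GC T) {y z x0 : V3} (hy : y ∈ cone S)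
    (hz : z ∈ cone T) (hyz : y + z = x0) (h1 : x0 ∉ frontier (cone S))
    (h2 : x0 ∉ frontier (cone T)) (h3 : ¬ ∃ r t, EdgeVec S r ∧ EdgeVec T t ∧ x0 = r + t) :
    LS (act S y) ⊔ LS (act T z) = ⊤ := by
  by_contra hne
  obtain ⟨n, hn, hL⟩ := exists_normal hne
  have hLy := le_sup_left.trans hL
  have hLz := le_sup_right.trans hL
  have hyH := hLy (self_mem_LS S y)
  have hzH := hLz (self_mem_LS T z)
  by_cases hy0 : y = 0
  · obtain ⟨s, hs⟩ := act_nonempty (S := T) (y := z)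
      (fun h => pl_ne_top hn (top_le_iff.1 (h ▸ hLz)))
    rw [hy0, zero_add] at hyz
    rw [← hyz] at h2
    exact h2 (frontier_of_act hT hz hs)
  by_cases hz0 : z = 0
  · obtain ⟨s, hs⟩ := act_nonempty (S := S) (y := y)
      (fun h => pl_ne_top hn (top_le_iff.1 (h ▸ hLy)))
    rw [hz0, add_zero] at hyz
    rw [← hyz] at h1
    exact h1 (frontier_of_act hS hy hs)
  obtain ⟨l, hl0, hl1, he⟩ := exit_step hS hn hy hy0 hLy hzH (hT.pos z hz hz0) (hyz ▸ h1)
  have hl : 0 < 1 - l := by linarith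
  obtain ⟨m, hm0, hm1, he'⟩ := exit_step hT hn (y := (1 - l) • z) (z := y + l • z)
    (cone_smul hz hl.le) (smul_ne_zero hl.ne' hz0)
    (by rw [act_smul T z hl.ne']; exact hLz)
    (Submodule.add_mem _ hyH (Submodule.smul_mem _ _ hzH)) (hS.pos _ he.1 he.2.1)
    (by
      rw [show (1 - l) • z + (y + l • z) = y + z by module, hyz]; exact h2)
  refine h3 ⟨(1 - m) • (y + l • z), _, he.smul (by linarith), he', ?_⟩
  rw [← hyz]
  module

theorem GC.bound {S : Finset V3} (hS : GC S) : ∃ M > 0, ∀ p ∈ cone S, ‖p‖ ≤ M * p 2 := by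
  have hK : IsCompact (cone S ∩ Metric.sphere 0 1) :=
    (isCompact_sphere (0 : V3) 1).inter_left (isClosed_cone S)
  rcases (cone S ∩ Metric.sphere (0 : V3) 1).eq_empty_or_nonempty with he | hne
  · refine ⟨1, one_pos, fun p hp => ?_⟩
    by_cases h0 : p = 0
    · simp [h0]
    exfalso
    have : ‖p‖⁻¹ • p ∈ cone S ∩ Metric.sphere (0 : V3) 1 :=
      ⟨cone_smul hp (by positivity), by simp [norm_smul, h0]⟩
    rw [he] at this; exact this
  · have hc : ContinuousOn (fun p : V3 => p 2) (cone S ∩ Metric.sphere 0 1) := by fun_prop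
    obtain ⟨q, hq, hmin⟩ := hK.exists_isMinOn hne hc
    have hq2 : 0 < q 2 := hS.pos q hq.1 (by
      rintro rfl; simpa using hq.2)
    refine ⟨(q 2)⁻¹, by positivity, fun p hp => ?_⟩
    by_cases h0 : p = 0
    · simp [h0]
    have hp' : ‖p‖⁻¹ • p ∈ cone S ∩ Metric.sphere (0 : V3) 1 :=
      ⟨cone_smul hp (by positivity), by simp [norm_smul, h0]⟩
    have h1 : q 2 ≤ ‖p‖⁻¹ * p 2 := by simpa using hmin hp'
    have hp0 : 0 < ‖p‖ := norm_pos_iff.2 h0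
    rw [inv_mul_eq_div, le_div_iff₀ hp0] at h1
    rw [inv_mul_eq_div, le_div_iff₀ hq2]
    linarith

theorem GC.nonneg {S : Finset V3} (hS : GC S) {p : V3} (hp : p ∈ cone S) : 0 ≤ p 2 := by
  by_cases h : p = 0
  · simp [h]
  · exact (hS.pos p hp h).le

theorem supp_bound {S T : Finset V3} (hS : GC S) (hT : GC T) {f h : V3 → ℝ}
    (hf : ∀ p, f p ≠ 0 → p ∈ cone S) (hh : ∀ p, h p ≠ 0 → p ∈ cone T) (x0 : V3) :
    ∃ R0, ∀ᶠ x in nhds x0, ∀ p, f p * h (x - p) ≠ 0 → ‖p‖ ≤ R0 := by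
  obtain ⟨M, hM, hb⟩ := hS.bound
  refine ⟨M * (x0 2 + 1), ?_⟩
  have hc : Continuous fun x : V3 => x 2 := by fun_prop
  filter_upwards [(hc.tendsto x0).eventually (gt_mem_nhds (lt_add_one (x0 2)))] with x hx p hp
  have h1 := hf p (left_ne_zero_of_mul hp)
  have h2 := hT.nonneg (hh _ (right_ne_zero_of_mul hp))
  simp at h2
  exact (hb p h1).trans (mul_le_mul_of_nonneg_left (by linarith) hM.le)

theorem outer_smooth {S T : Finset V3} (hS : GC S) (hT : GC T) {x0 : V3}
    (h1 : x0 ∉ frontier (cone S))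
    (h2 : x0 ∉ frontier (cone T)) (h3 : ¬ ∃ r t, EdgeVec S r ∧ EdgeVec T t ∧ x0 = r + t) :
    ContDiffAt ℝ 3 (W (fun _ => 1) (ind (cone S)) (ind (cone T))) x0 := by
  obtain ⟨R0, hR⟩ := supp_bound hS hT (f := ind (cone S)) (h := ind (cone T))
    (fun p hp => ind_ne hp) (fun p hp => ind_ne hp) x0
  refine glue (Cls_CS x0) (BM_ind_cone S) (BM_ind_cone T) R0 hR (fun y => ?_) _ contDiff_const
    (fun _ => zero_le_one)
  have hyz : y + (x0 - y) = x0 := by abel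
  by_cases hy : y ∈ cone S
  · by_cases hz : x0 - y ∈ cone T
    · exact lemmaB (BM_ind_cone S) (BM_ind_cone T) (LocInv_mem hy) (LocInv_mem hz) hyz
        (outer_top hS hT hy hz hyz h1 h2 h3)
    · exact lemmaB (BM_ind_cone S) (BM_ind_cone T) (LocInv_mem hy) (LocInv_not hz) hyz (by simp)
  · by_cases hz : x0 - y ∈ cone T
    · exact lemmaB (BM_ind_cone S) (BM_ind_cone T) (LocInv_not hy) (LocInv_mem hz) hyz (by simp)
    · exact lemmaB (BM_ind_cone S) (BM_ind_cone T) (LocInv_not hy) (LocInv_not hz) hyz (by simp)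

end CC

namespace CC
open scoped InnerProductSpace

theorem edge_of_vec {S : Finset V3} (hS : GC S) {y : V3} (h : EdgeVec S y) :
    ∃ R, IsEdgeOf (cone S) R ∧ y ∈ R := by
  obtain ⟨hy, hy0, hL⟩ := h
  set w : V3 := ∑ s ∈ act S y, s with hw
  have hwi : ∀ x, ⟪w, x⟫_ℝ = ∑ s ∈ act S y, ⟪s, x⟫_ℝ := fun x => by rw [hw, sum_inner]
  have hle : ∀ x ∈ cone S, ⟪w, x⟫_ℝ ≤ 0 := fun x hx => by
    rw [hwi]; exact Finset.sum_nonpos fun s hs => hx s (mem_act.1 hs).1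
  have hwy : ⟪w, y⟫_ℝ = 0 := by
    rw [hwi]; exact Finset.sum_eq_zero fun s hs => (mem_act.1 hs).2
  have hyR : y ∈ exposedFace (cone S) w := ⟨hy, fun x hx => by rw [hwy]; exact hle x hx⟩
  have h0R : (0 : V3) ∈ exposedFace (cone S) w :=
    ⟨zero_mem_cone S, fun x hx => by simpa using hle x hx⟩
  have hsub : ∀ x ∈ exposedFace (cone S) w, x ∈ Submodule.span ℝ {y} := by
    rintro x ⟨hx, hx'⟩
    rw [← hL]
    have h1 : ⟪w, x⟫_ℝ = 0 := le_antisymm (hle x hx) (by simpa using hx' 0 (zero_mem_cone S))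
    rw [hwi, Finset.sum_eq_zero_iff_of_nonpos (fun s hs => hx s (mem_act.1 hs).1)] at h1
    exact h1
  refine ⟨exposedFace (cone S) w, ⟨⟨w, ?_, rfl⟩, ?_⟩, hyR⟩
  · intro h0
    obtain ⟨s, hs⟩ := act_nonempty (S := S) (y := y) (by
      rw [hL]; intro h
      have := finrank_span_singleton (K := ℝ) hy0
      rw [h, finrank_top] at this
      simp at this)
    obtain ⟨p0, hp0⟩ := hS.int
    have h1 : ⟪w, p0⟫_ℝ < 0 := by
      rw [hwi]
      exact Finset.sum_neg (fun s hs => hp0 s (mem_act.1 hs).1) ⟨s, hs⟩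
    rw [h0] at h1; simp at h1
  · have : vectorSpan ℝ (exposedFace (cone S) w) = Submodule.span ℝ {y} := by
      apply le_antisymm
      · rw [vectorSpan_def, Submodule.span_le]
        rintro _ ⟨a, ha, b, hb, rfl⟩
        exact Submodule.sub_mem _ (hsub a ha) (hsub b hb)
      · rw [Submodule.span_singleton_le_iff_mem]
        simpa using vsub_mem_vectorSpan ℝ hyR h0R
    rw [this, finrank_span_singleton hy0]

theorem vec_of_edge {S : Finset V3} (hS : GC S) {R : Set V3} (h : IsEdgeOf (cone S) R) :
    ∃ r, EdgeVec S r ∧ ∀ x ∈ R, ∃ c : ℝ, 0 ≤ c ∧ x = c • r := by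
  obtain ⟨⟨w, -, rfl⟩, hfr⟩ := h
  set R := exposedFace (cone S) w with hR
  have hne : R.Nonempty := by
    by_contra h
    rw [Set.not_nonempty_iff_eq_empty] at h
    rw [h, vectorSpan_empty] at hfr
    simp at hfr
  obtain ⟨x1, hx1, hx1'⟩ := hne
  have hw1 : ⟪w, x1⟫_ℝ = 0 := by
    have h1 := hx1' 0 (zero_mem_cone S)
    have h2 := hx1' _ (cone_smul hx1 zero_le_two)
    rw [inner_smul_right] at h2
    simp at h1; linarith
  have hle : ∀ x ∈ cone S, ⟪w, x⟫_ℝ ≤ 0 := fun x hx => by rw [← hw1]; exact hx1' x hx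
  have hRi : ∀ x, x ∈ R ↔ x ∈ cone S ∧ ⟪w, x⟫_ℝ = 0 := by
    intro x
    constructor
    · rintro ⟨hx, hx'⟩
      exact ⟨hx, le_antisymm (hle x hx) (by simpa using hx' 0 (zero_mem_cone S))⟩
    · rintro ⟨hx, hx'⟩
      exact ⟨hx, fun y hy => by rw [hx']; exact hle y hy⟩
  have h0 : (0 : V3) ∈ R := (hRi 0).2 ⟨zero_mem_cone S, by simp⟩
  have hvs : ∀ x ∈ R, x ∈ vectorSpan ℝ R := fun x hx => by
    simpa using vsub_mem_vectorSpan ℝ hx h0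
  have : ∃ r ∈ R, r ≠ 0 := by
    by_contra h
    push Not at h
    have : R = {0} := Set.eq_singleton_iff_unique_mem.2 ⟨h0, h⟩
    rw [this, vectorSpan_singleton] at hfr
    simp at hfr
  obtain ⟨r, hr, hr0⟩ := this
  have hmul : ∀ x ∈ R, ∃ c : ℝ, x = c • r := by
    intro x hx
    have hr0' : (⟨r, hvs r hr⟩ : vectorSpan ℝ R) ≠ 0 := by
      simpa [Subtype.ext_iff] using hr0
    obtain ⟨c, hc⟩ := (finrank_eq_one_iff_of_nonzero' _ hr0').1 hfr ⟨x, hvs x hx⟩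
    exact ⟨c, (congrArg Subtype.val hc).symm⟩
  have hrc := ((hRi r).1 hr)
  refine ⟨r, ⟨hrc.1, hr0, ?_⟩, ?_⟩
  · apply le_antisymm
    · intro v hv
      obtain ⟨d1, hd1, h1⟩ := small_move (v := v) hrc.1 (fun s hs => (hv s hs).le)
      obtain ⟨d2, hd2, h2⟩ := small_move (v := -v) hrc.1
        (fun s hs => by rw [inner_neg_right, hv s hs]; simp)
      obtain ⟨d, hd, hd'⟩ := exists_between (lt_min hd1 hd2)
      have h1 := h1 d hd.le (hd'.trans_le (min_le_left _ _))
      have h2 := h2 d hd.le (hd'.trans_le (min_le_right _ _))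
      have w1 := hle _ h1
      have w2 := hle _ h2
      simp only [inner_add_right, inner_smul_right, hrc.2, inner_neg_right, zero_add] at w1 w2
      obtain ⟨c, hc⟩ := hmul _ ((hRi _).2 ⟨h1, by
        rw [inner_add_right, inner_smul_right, hrc.2]; linarith⟩)
      rw [Submodule.mem_span_singleton]
      refine ⟨d⁻¹ * (c - 1), ?_⟩
      have : d • v = (c - 1) • r := by rw [sub_smul, ← hc]; simp
      rw [mul_smul, ← this, smul_smul, inv_mul_cancel₀ hd.ne', one_smul]
    · rw [Submodule.span_singleton_le_iff_mem]; exact self_mem_LS S r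
  · intro x hx
    obtain ⟨c, rfl⟩ := hmul x hx
    refine ⟨c, ?_, rfl⟩
    have h1 := hS.nonneg ((hRi _).1 hx).1
    have h2 := hS.pos r hrc.1 hr0
    simp at h1
    by_contra h
    nlinarith [not_le.1 h]

theorem GC_of {A : Set V3} (hA : IsPolyhedralCone A) (hi : (interior A).Nonempty)
    (hup : A ⊆ {x | 0 ≤ x 2}) (h0 : A ∩ {x | x 2 = 0} = {0}) :
    ∃ S, A = cone S ∧ GC S := by
  classical
  obtain ⟨S, rfl⟩ := hA
  have he : {x : V3 | ∀ s ∈ S, ⟪s, x⟫_ℝ ≤ (0 : ℝ)} = cone (S.erase 0) := by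
    ext x
    simp only [cone, Set.mem_ofPred_eq, Finset.mem_erase]
    refine ⟨fun h s hs => h s hs.2, fun h s hs => ?_⟩
    by_cases h0 : s = 0
    · simp [h0]
    · exact h s ⟨h0, hs⟩
  refine ⟨S.erase 0, he, ?_, ?_⟩
  · obtain ⟨p, hp⟩ := hi
    refine ⟨p, fun s hs => ?_⟩
    rw [he] at hp
    have hc : Continuous fun t : ℝ => p + t • s := by fun_prop
    have h := (hc.tendsto' 0 p (by simp)).eventually (mem_interior_iff_mem_nhds.1 hp)
    obtain ⟨δ, hδ, h⟩ := Metric.eventually_nhds_iff.1 h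
    have h1 := @h (δ / 2) (by simp [abs_of_pos hδ, hδ]) s hs
    rw [inner_add_right, inner_smul_right, real_inner_self_eq_norm_sq] at h1
    have : 0 < ‖s‖ := norm_pos_iff.2 (Finset.mem_erase.1 hs).1
    have : 0 < δ / 2 * ‖s‖ ^ 2 := by positivity
    linarith
  · intro x hx hx0
    rw [← he] at hx
    refine lt_of_le_of_ne (hup hx) fun h => hx0 ?_
    have : x ∈ ({0} : Set V3) := by rw [← h0]; exact ⟨hx, h.symm⟩
    simpa using this

theorem poly_neg {B : Set V3} (hB : IsPolyhedralCone B) : IsPolyhedralCone (-B) := by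
  classical
  obtain ⟨S, rfl⟩ := hB
  refine ⟨S.image (fun s => -s), ?_⟩
  ext x
  simp

theorem cov_eq (A C : Set V3) (x : V3) (hA : IsClosed A) (hC : IsClosed C) :
    crossCovariogram A (-C) x = W (fun _ => 1) (ind A) (ind C) x := by
  unfold crossCovariogram W
  have h1 : A ∩ ((x + ·) '' (-C)) = A ∩ {p | x - p ∈ C} := by
    ext p
    simp only [Set.mem_inter_iff, Set.mem_image, Set.mem_neg, Set.mem_ofPred_eq]
    refine and_congr_right fun _ => ⟨?_, fun h => ⟨p - x, by simpa using h, by abel⟩⟩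
    rintro ⟨q, hq, rfl⟩
    simpa using hq
  rw [h1]
  have hm : MeasurableSet (A ∩ {p | x - p ∈ C}) :=
    hA.measurableSet.inter ((hC.preimage (by fun_prop : Continuous fun p : V3 => x - p)).measurableSet)
  have := integral_indicator_one (μ := (volume : Measure V3)) hm
  rw [Measure.real] at this
  rw [← this]
  congr 1; ext p
  by_cases hp : p ∈ A <;> by_cases hq : x - p ∈ C <;> simp [ind, hp, hq]

theorem isC3At_iff {f : V3 → ℝ} {x : V3} : IsC3At f x ↔ ContDiffAt ℝ 3 f x := by
  constructor
  · rintro ⟨U, hU, h⟩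
    exact h.contDiffAt hU
  · intro h
    obtain ⟨U, hU, h'⟩ := h.contDiffOn (m := 3) le_rfl (by simp)
    exact ⟨U, by simpa using hU, h'⟩

theorem outer_thm {S T : Finset V3} (hS : GC S) (hT : GC T) {x : V3}
    (hx : ¬ ContDiffAt ℝ 3 (W (fun _ => 1) (ind (cone S)) (ind (cone T))) x) :
    x ∈ frontier (cone S) ∨ x ∈ frontier (cone T) ∨
    ∃ R R', IsEdgeOf (cone S) R ∧ IsEdgeOf (cone T) R' ∧ x ∈ R + R' := by
  by_contra h
  push Not at h
  obtain ⟨h1, h2, h3⟩ := h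
  refine hx (outer_smooth hS hT h1 h2 ?_)
  rintro ⟨r, t, hr, ht, rfl⟩
  obtain ⟨R, hR, hrR⟩ := edge_of_vec hS hr
  obtain ⟨R', hR', hrR'⟩ := edge_of_vec hT ht
  exact h3 R R' hR hR' (Set.add_mem_add hrR hrR')

def InnerClaim : Prop := ∀ {S T : Finset V3} (_ : GC S) (_ : GC T) {r t : V3} (_ : EdgeVec S r)
    (_ : EdgeVec T t) {ρ τ : ℝ} (_ : 0 ≤ ρ) (_ : 0 ≤ τ),
    ¬ ContDiffAt ℝ 3 (W (fun _ => 1) (ind (cone S)) (ind (cone T))) (ρ • r + τ • t)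

theorem main_of (hin : InnerClaim)
    (A B : Set V3)
    (hA : IsPolyhedralCone A) (hB : IsPolyhedralCone B)
    (hAint : (interior A).Nonempty) (hBint : (interior B).Nonempty)
    (hAup : A ⊆ {x | 0 ≤ x 2}) (hBdown : -B ⊆ {x | 0 ≤ x 2})
    (hA0 : A ∩ {x | x 2 = 0} = {0}) (hB0 : B ∩ {x | x 2 = 0} = {0})
    (S3 E : Set V3)
    (hS3 : S3 = closure {x | ¬IsC3At (crossCovariogram A B) x})
    (hE : E = {x | ∃ R T : Set V3,
      IsEdgeOf A R ∧ IsEdgeOf (-B) T ∧ x ∈ R + T}) :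
    E ⊆ S3 ∧ S3 ⊆ frontier A ∪ (-frontier B) ∪ E := by
  obtain ⟨S, hAS, hS⟩ := GC_of hA hAint hAup hA0
  obtain ⟨T, hBT, hT⟩ := GC_of (A := -B) (poly_neg hB)
    (by rw [show interior (-B) = -interior B from (Homeomorph.neg V3).preimage_interior B |>.symm]
        exact hBint.neg) hBdown
    (by
      ext x
      have := Set.ext_iff.1 hB0 (-x)
      simp at this ⊢
      exact this)
  have hfr : -frontier B = frontier (cone T) := by
    rw [← hBT]
    exact (Homeomorph.neg V3).preimage_frontier B
  have hBeq : B = -cone T := by rw [← hBT, neg_neg]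
  have hcov : crossCovariogram A B = W (fun _ => 1) (ind (cone S)) (ind (cone T)) := by
    ext x
    rw [hAS, hBeq, cov_eq _ _ _ (isClosed_cone S) (isClosed_cone T)]
  have hcl : IsClosed {x | ¬IsC3At (crossCovariogram A B) x} := by
    rw [← isOpen_compl_iff, isOpen_iff_mem_nhds]
    intro x hx
    simp only [Set.mem_compl_iff, Set.mem_ofPred_eq, not_not, isC3At_iff] at hx
    filter_upwards [hx.eventually (by simp)] with y hy
    simpa [isC3At_iff] using hy
  rw [hcl.closure_eq] at hS3
  rw [hfr, hS3, hE, hBT, hAS]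
  rw [hAS] at hcov
  simp only [isC3At_iff, hcov]
  constructor
  · rintro x ⟨R, R', hR, hR', a, ha, b, hb, rfl⟩
    obtain ⟨r, hr, hr'⟩ := vec_of_edge hS hR
    obtain ⟨t, ht, ht'⟩ := vec_of_edge hT hR'
    obtain ⟨c, hc, rfl⟩ := hr' a ha
    obtain ⟨d, hd, rfl⟩ := ht' b hb
    exact hin hS hT hr ht hc hd
  · intro x hx
    rcases outer_thm hS hT hx with h | h | h
    · exact Or.inl (Or.inl h)
    · exact Or.inl (Or.inr h)
    · exact Or.inr h

end CC

namespace CC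
open scoped InnerProductSpace

def Inv (g : V3 → ℝ) (L : Submodule ℝ V3) : Prop := ∀ p, ∀ v ∈ L, g (p + v) = g p

theorem Inv.mono {g : V3 → ℝ} {L L' : Submodule ℝ V3} (h : Inv g L) (hl : L' ≤ L) : Inv g L' :=
  fun p v hv => h p v (hl hv)

theorem Inv.loc {g : V3 → ℝ} {L : Submodule ℝ V3} (h : Inv g L) (y : V3) : LocInv g y L :=
  LocInv_of (Filter.EventuallyEq.refl _ _) h

structure FlipU (n : V3) (ε : ℝ) (f : V3 → ℝ) (y : V3) (L : Submodule ℝ V3) (u : V3 → ℝ) :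
    Prop where
  bm : BM u
  nn : ∀ p, 0 ≤ u p
  van : ∀ p, ⟪n, p⟫_ℝ < 0 → u p = 0
  inv : Inv u L
  ex : ∃ k1 k2 : V3 → ℝ, BM k1 ∧ BM k2 ∧ (∃ L1, L ≤ L1 ∧ ¬ L1 ≤ pl n ∧ Inv k1 L1) ∧
    (∃ L2, L ≤ L2 ∧ ¬ L2 ≤ pl n ∧ Inv k2 L2) ∧ f =ᶠ[nhds y] fun p => ε * u p + (k1 p + k2 p)

theorem top_of_pl {n : V3} (hn : n ≠ 0) {Q : Submodule ℝ V3} (h1 : pl n ≤ Q) (h2 : ¬ Q ≤ pl n) :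
    Q = ⊤ := by
  have hlt : pl n < Q := lt_of_le_not_ge h1 h2
  have := Submodule.finrank_lt_finrank_of_lt hlt
  rw [finrank_pl hn] at this
  apply Submodule.eq_top_of_finrank_eq
  have h3 := Submodule.finrank_le Q
  simp at h3 ⊢
  omega

theorem flip_pair {n : V3} (hn : n ≠ 0) {ε ε' : ℝ} {f h u u' : V3 → ℝ} {y z x0 : V3}
    {L L' : Submodule ℝ V3} (hyz : y + z = x0) (H : FlipU n ε f y L u) (H' : FlipU n ε' h z L' u')
    (hL : pl n ≤ L ⊔ L') :
    ∃ δ > 0, ∀ φ : V3 → ℝ, ContDiff ℝ 3 φ → (∀ p, 0 ≤ φ p) → tsupport φ ⊆ Metric.ball y δ →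
      ContDiffAt ℝ 3 (fun x => W φ f h x - ε * ε' * W φ u u' x) x0 := by
  obtain ⟨k1, k2, b1, b2, ⟨L1, l1, m1, i1⟩, ⟨L2, l2, m2, i2⟩, he⟩ := H.ex
  obtain ⟨k1', k2', b1', b2', ⟨L1', l1', m1', i1'⟩, ⟨L2', l2', m2', i2'⟩, he'⟩ := H'.ex
  have hk' : BM fun p => k1' p + k2' p := b1'.add b2'
  have hk : BM fun p => k1 p + k2 p := b1.add b2
  have heu : BM fun p => ε * u p := H.bm.cmul ε
  have heu' : BM fun p => ε' * u' p := H'.bm.cmul ε'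
  have hh' : BM fun p => ε' * u' p + (k1' p + k2' p) := heu'.add hk'
  have hinv' : Inv (fun p => ε' * u' p + (k1' p + k2' p)) L' := fun p v hv => by
    simp only [H'.inv p v hv, i1' p v (l1' hv), i2' p v (l2' hv)]
  have hinvu : Inv (fun p => ε * u p) L := fun p v hv => by
    simp only [H.inv p v hv]
  have t1 : ∀ M, L ≤ M → ¬ M ≤ pl n → M ⊔ L' = ⊤ := fun M a b =>
    top_of_pl hn (hL.trans (sup_le_sup_right a L')) fun h => b (le_sup_left.trans h)
  have t2 : ∀ M, L' ≤ M → ¬ M ≤ pl n → L ⊔ M = ⊤ := fun M a b =>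
    top_of_pl hn (hL.trans (sup_le_sup_left a L)) fun h => b (le_sup_right.trans h)
  have a1 : LocAll (CS x0) (fun p => k1 p + k2 p) (fun p => ε' * u' p + (k1' p + k2' p)) y :=
    LocAll.add_left (Cls_CS x0) b1 b2 hh'
      (lemmaB b1 hh' (i1.loc y) (hinv'.loc z) hyz (t1 L1 l1 m1))
      (lemmaB b2 hh' (i2.loc y) (hinv'.loc z) hyz (t1 L2 l2 m2))
  have a2 : LocAll (CS x0) (fun p => ε * u p) (fun p => k1' p + k2' p) y :=
    LocAll.add_right (Cls_CS x0) b1' b2' heu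
      (lemmaB heu b1' (hinvu.loc y) (i1'.loc z) hyz (t2 L1' l1' m1'))
      (lemmaB heu b2' (hinvu.loc y) (i2'.loc z) hyz (t2 L2' l2' m2'))
  obtain ⟨δ1, hδ1, c1⟩ := a1
  obtain ⟨δ2, hδ2, c2⟩ := a2
  obtain ⟨δ3, hδ3, e3⟩ := Metric.eventually_nhds_iff.1 he
  obtain ⟨δ4, hδ4, e4⟩ := Metric.eventually_nhds_iff.1 he'
  refine ⟨min (min δ1 δ2) (min δ3 (δ4 / 2)), by positivity, fun φ a b c => ?_⟩
  have hs := hcs_of c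
  have g1 := c1 φ a b (c.trans (Metric.ball_subset_ball ((min_le_left _ _).trans (min_le_left _ _))))
  have g2 := c2 φ a b (c.trans (Metric.ball_subset_ball ((min_le_left _ _).trans (min_le_right _ _))))
  refine (ContDiffAt.add g1 g2).congr_of_eventuallyEq ?_
  filter_upwards [Metric.ball_mem_nhds x0 (half_pos hδ4)] with x hx
  rw [sub_eq_iff_eq_add]
  unfold W
  rw [← integral_const_mul]
  rw [← integral_add (W_integrable a.continuous hs hk hh' x)
    (W_integrable a.continuous hs heu hk' x), ← integral_add]
  · congr 1; ext p
    by_cases hp : φ p = 0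
    · simp [hp]
    have hp' : p ∈ Metric.ball y _ := c (subset_tsupport _ hp)
    simp only [Metric.mem_ball, lt_min_iff] at hp'
    have h2 : dist (x - p) z ≤ dist x x0 + dist p y := by
      rw [dist_eq_norm, dist_eq_norm, dist_eq_norm, ← hyz]
      calc ‖x - p - z‖ = ‖(x - (y + z)) - (p - y)‖ := by congr 1; abel
        _ ≤ _ := norm_sub_le _ _
    rw [Metric.mem_ball] at hx
    rw [e3 hp'.2.1, e4 (by linarith [hp'.2.2])]
    ring
  · exact (W_integrable a.continuous hs hk hh' x).add (W_integrable a.continuous hs heu hk' x)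
  · exact (W_integrable a.continuous hs H.bm H'.bm x).const_mul _

theorem W_nonneg {φ u u' : V3 → ℝ} (h : ∀ p, 0 ≤ φ p) (hu : ∀ p, 0 ≤ u p) (hu' : ∀ p, 0 ≤ u' p)
    (x : V3) : 0 ≤ W φ u u' x :=
  integral_nonneg fun p => mul_nonneg (h p) (mul_nonneg (hu p) (hu' _))

theorem W_van {n : V3} {φ u u' : V3 → ℝ} (hu : ∀ p, ⟪n, p⟫_ℝ < 0 → u p = 0)
    (hu' : ∀ p, ⟪n, p⟫_ℝ < 0 → u' p = 0) (x : V3) (hx : ⟪n, x⟫_ℝ < 0) : W φ u u' x = 0 := by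
  unfold W
  have : (fun p => φ p * (u p * u' (x - p))) = fun _ => 0 := by
    ext p
    by_cases h : ⟪n, p⟫_ℝ < 0
    · simp [hu p h]
    · rw [hu' (x - p) (by rw [inner_sub_right]; linarith)]; simp
  rw [this]; simp

theorem flip_CG {n : V3} (hn : n ≠ 0) {ε ε' : ℝ} {f h u u' : V3 → ℝ} {y z x0 : V3}
    {L L' : Submodule ℝ V3} (hyz : y + z = x0) (H : FlipU n ε f y L u) (H' : FlipU n ε' h z L' u')
    (hL : pl n ≤ L ⊔ L') : LocAll (CG (ε * ε') (fun x => ⟪n, x⟫_ℝ) x0) f h y := by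
  obtain ⟨δ, hδ, h⟩ := flip_pair hn hyz H H' hL
  exact ⟨δ, hδ, fun φ a b c => ⟨W φ u u', W_nonneg b H.nn H'.nn, W_van H.van H'.van, h φ a b c⟩⟩


theorem exists_not_mem_of_finrank {L : Submodule ℝ V3} (h : Module.finrank ℝ L < 3) :
    ∃ v, v ∉ L := by
  by_contra hc
  push Not at hc
  rw [(Submodule.eq_top_iff').2 hc, finrank_top] at h
  simp at h

theorem span_pair_finrank (a b : V3) : Module.finrank ℝ (Submodule.span ℝ {a, b}) ≤ 2 := by
  classical
  have := finrank_span_finset_le_card (R := ℝ) ({a, b} : Finset V3)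
  simp only [Finset.coe_insert, Finset.coe_singleton] at this
  exact this.trans Finset.card_le_two

theorem wedge {S : Finset V3} (hS : GC S) {y : V3} (he : EdgeVec S y) :
    ∃ s1 ∈ act S y, ∃ s2 ∈ act S y,
      (∀ p, p ∈ cone (act S y) ↔ ⟪s1, p⟫_ℝ ≤ 0 ∧ ⟪s2, p⟫_ℝ ≤ 0) ∧
      (∀ p, ⟪s1, p⟫_ℝ = 0 → ⟪s2, p⟫_ℝ = 0 → p ∈ Submodule.span ℝ {y}) := by
  obtain ⟨p0, hp0⟩ := hS.int
  have hne : (act S y).Nonempty := by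
    obtain ⟨s, hs⟩ := act_nonempty (S := S) (y := y) (by
      rw [he.2.2]; intro h
      have := finrank_span_singleton (K := ℝ) he.2.1
      rw [h, finrank_top] at this
      simp at this)
    exact ⟨s, hs⟩
  have hneg : ∀ s ∈ act S y, ⟪s, p0⟫_ℝ < 0 := fun s hs => hp0 s (mem_act.1 hs).1
  obtain ⟨q, hq⟩ := exists_not_mem_of_finrank ((span_pair_finrank y p0).trans_lt (by norm_num))
  have htop : Submodule.span ℝ {y, p0} ⊔ Submodule.span ℝ {q} = ⊤ := by
    have h1 : Submodule.span ℝ {y} < Submodule.span ℝ {y, p0} := by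
      refine lt_of_le_of_ne (Submodule.span_mono (by simp)) fun h => ?_
      have : p0 ∈ Submodule.span ℝ {y} := by rw [h]; exact Submodule.subset_span (by simp)
      rw [← he.2.2] at this
      obtain ⟨s, hs⟩ := hne
      linarith [this s hs, hneg s hs]
    have h2 : Submodule.span ℝ {y, p0} < Submodule.span ℝ {y, p0} ⊔ Submodule.span ℝ {q} := by
      refine lt_of_le_of_ne le_sup_left fun h => hq ?_
      rw [h]; exact Submodule.mem_sup_right (Submodule.mem_span_singleton_self q)
    have h1' := Submodule.finrank_lt_finrank_of_lt h1
    have h2' := Submodule.finrank_lt_finrank_of_lt h2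
    rw [finrank_span_singleton he.2.1] at h1'
    apply Submodule.eq_top_of_finrank_eq
    have h3 := Submodule.finrank_le (Submodule.span ℝ {y, p0} ⊔ Submodule.span ℝ {q})
    simp at h3 ⊢
    omega
  have hdec : ∀ p : V3, ∃ b c : ℝ, ∀ s ∈ act S y, ⟪s, p⟫_ℝ = b * ⟪s, p0⟫_ℝ + c * ⟪s, q⟫_ℝ := by
    intro p
    have hp : p ∈ Submodule.span ℝ {y, p0} ⊔ Submodule.span ℝ {q} := by rw [htop]; trivial
    obtain ⟨a, ha, b, hb, rfl⟩ := Submodule.mem_sup.1 hp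
    obtain ⟨a1, a2, rfl⟩ := Submodule.mem_span_pair.1 ha
    obtain ⟨c, rfl⟩ := Submodule.mem_span_singleton.1 hb
    refine ⟨a2, c, fun s hs => ?_⟩
    simp only [inner_add_right, inner_smul_right, (mem_act.1 hs).2]
    ring
  obtain ⟨s1, hs1, hmax⟩ := Finset.exists_max_image (act S y)
    (fun s => ⟪s, q⟫_ℝ / (-⟪s, p0⟫_ℝ)) hne
  obtain ⟨s2, hs2, hmin⟩ := Finset.exists_min_image (act S y)
    (fun s => ⟪s, q⟫_ℝ / (-⟪s, p0⟫_ℝ)) hne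
  have hiff : ∀ p, p ∈ cone (act S y) ↔ ⟪s1, p⟫_ℝ ≤ 0 ∧ ⟪s2, p⟫_ℝ ≤ 0 := by
    intro p
    refine ⟨fun h => ⟨h s1 hs1, h s2 hs2⟩, fun ⟨h1, h2⟩ s hs => ?_⟩
    obtain ⟨b, c, hbc⟩ := hdec p
    have key : ∀ s ∈ act S y, ⟪s, p⟫_ℝ =
        (-⟪s, p0⟫_ℝ) * (-b + c * (⟪s, q⟫_ℝ / (-⟪s, p0⟫_ℝ))) := by
      intro s hs
      rw [hbc s hs]
      have := (hneg s hs).ne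
      field_simp
      ring
    rw [key _ hs1] at h1
    rw [key _ hs2] at h2
    rw [key _ hs]
    have n0 : 0 < -⟪s, p0⟫_ℝ := by linarith [hneg s hs]
    have n1 : 0 < -⟪s1, p0⟫_ℝ := by linarith [hneg s1 hs1]
    have n2 : 0 < -⟪s2, p0⟫_ℝ := by linarith [hneg s2 hs2]
    have h1 := nonpos_of_mul_nonpos_right h1 n1
    have h2 := nonpos_of_mul_nonpos_right h2 n2
    have hm1 := hmax s hs
    have hm2 := hmin s hs
    refine mul_nonpos_of_nonneg_of_nonpos n0.le ?_
    rcases le_total 0 c with hc | hc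
    · linarith [mul_le_mul_of_nonneg_left hm1 hc]
    · linarith [mul_le_mul_of_nonpos_left hm2 hc]
  refine ⟨s1, hs1, s2, hs2, hiff, fun p h1 h2 => ?_⟩
  rw [← he.2.2]
  intro s hs
  have a1 := (hiff p).2 ⟨h1.le, h2.le⟩ s hs
  have a2 := (hiff (-p)).2 ⟨by simp [h1], by simp [h2]⟩ s hs
  simp at a2
  linarith

theorem wedge_surj {s1 s2 y : V3} (hy : y ≠ 0) (h : ∀ p, ⟪s1, p⟫_ℝ = 0 → ⟪s2, p⟫_ℝ = 0 →
    p ∈ Submodule.span ℝ {y}) (a b : ℝ) : ∃ p : V3, ⟪s1, p⟫_ℝ = a ∧ ⟪s2, p⟫_ℝ = b := by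
  let F : V3 →ₗ[ℝ] ℝ × ℝ := (innerₛₗ ℝ s1).prod (innerₛₗ ℝ s2)
  have hF : ∀ p, F p = (⟪s1, p⟫_ℝ, ⟪s2, p⟫_ℝ) := fun p => rfl
  have hk : LinearMap.ker F ≤ Submodule.span ℝ {y} := by
    intro p hp
    rw [LinearMap.mem_ker, hF, Prod.mk_eq_zero] at hp
    exact h p hp.1 hp.2
  have h1 := Submodule.finrank_mono hk
  rw [finrank_span_singleton hy] at h1
  have h2 := F.finrank_range_add_finrank_ker
  have h3 : LinearMap.range F = ⊤ := by
    apply Submodule.eq_top_of_finrank_eq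
    have h4 := Submodule.finrank_le (LinearMap.range F)
    simp at h2 h4 ⊢
    omega
  have : (a, b) ∈ LinearMap.range F := by rw [h3]; trivial
  obtain ⟨p, hp⟩ := this
  rw [hF, Prod.mk.injEq] at hp
  exact ⟨p, hp⟩

theorem wedge_coeff {s1 s2 y n : V3} (hyn : y ∈ pl n) (h : ∀ p, ⟪s1, p⟫_ℝ = 0 → ⟪s2, p⟫_ℝ = 0 →
    p ∈ Submodule.span ℝ {y}) : ∃ l m : ℝ, ∀ p, ⟪n, p⟫_ℝ = l * (-⟪s1, p⟫_ℝ) + m * (-⟪s2, p⟫_ℝ) := by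
  have : n ∈ Submodule.span ℝ {s1, s2} := by
    rw [← Submodule.orthogonal_orthogonal (Submodule.span ℝ {s1, s2})]
    rw [Submodule.mem_orthogonal]
    intro p hp
    rw [Submodule.mem_orthogonal] at hp
    obtain ⟨c, rfl⟩ := Submodule.mem_span_singleton.1 (h p
      (hp s1 (Submodule.subset_span (by simp))) (hp s2 (Submodule.subset_span (by simp))))
    rw [real_inner_comm, inner_smul_right, mem_pl.1 hyn, mul_zero]
  obtain ⟨a, b, rfl⟩ := Submodule.mem_span_pair.1 this
  refine ⟨-a, -b, fun p => ?_⟩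
  simp only [inner_add_left, real_inner_smul_left]
  ring

end CC

namespace CC
open scoped InnerProductSpace

def Fac (S : Finset V3) (n : V3) : Prop := ∃ w ∈ cone S, LS (act S w) = pl n

noncomputable def fd (S : Finset V3) (κ : ℝ) (w : V3) (p : V3) : ℝ :=
  ind (cone S) p - κ * ind (cone S) (p - w)

def Cfg (S : Finset V3) (n : V3) (κ : ℝ) (w : V3) : Prop :=
  (κ = 0 ∧ w = 0 ∧ ¬ Fac S n) ∨ (κ = 1 ∧ w ∈ cone S ∧ LS (act S w) = pl n)

def Strong (u : V3 → ℝ) : Prop := (∀ s : ℝ, 0 < s → ∀ q, u (s • q) = u q) ∧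
  ∃ w0 : V3, ∃ ρ > 0, ∀ q ∈ Metric.ball w0 ρ, 1 ≤ u q

def Fl (S : Finset V3) (n : V3) (ε : ℝ) (f : V3 → ℝ) (w y : V3) : Prop :=
  ∃ I ⊆ S, ∃ a ∈ pl n, ‖a‖ ≤ ‖w‖ ∧ y - a ∈ LS I ∧ ∃ u, FlipU n ε f y (LS I ⊓ pl n) u

def One (S : Finset V3) (n : V3) (ε : ℝ) : Prop :=
  ∀ y ∈ pl n, y ∈ cone S → y ≠ 0 → ∀ f, f =ᶠ[nhds y] ind (cone (act S y)) →
    ∃ u, FlipU n ε f y (LS (act S y) ⊓ pl n) u ∧ (EdgeVec S y → Strong u)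

def Two (S : Finset V3) (n : V3) (ε : ℝ) (w : V3) : Prop :=
  ∀ y ∈ pl n, y ∈ cone S → y - w ∈ cone S → y - w ≠ 0 → ∀ f : V3 → ℝ,
    (f =ᶠ[nhds y] fun p => ind (cone (act S y)) p - ind (cone (act S (y - w))) (p - w)) →
    Fl S n ε f w y

theorem not_top_le {n : V3} (hn : n ≠ 0) : ¬ (⊤ : Submodule ℝ V3) ≤ pl n :=
  fun h => pl_ne_top hn (top_le_iff.1 h)

theorem BM_ind {X : Set V3} (h : MeasurableSet X) : BM (ind X) := BM.ind h

/-- zero flip -/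
theorem FlipU.mk0 {n : V3} (hn : n ≠ 0) {ε : ℝ} {f k : V3 → ℝ} {y : V3} {L L1 : Submodule ℝ V3}
    (hk : BM k) (hL : L ≤ L1) (h1 : ¬ L1 ≤ pl n) (hi : Inv k L1) (he : f =ᶠ[nhds y] k) :
    FlipU n ε f y L (fun _ => 0) where
  bm := BM.const 0
  nn _ := le_rfl
  van _ _ := rfl
  inv _ _ _ := rfl
  ex := ⟨k, fun _ => 0, hk, BM.const 0, ⟨L1, hL, h1, hi⟩,
    ⟨⊤, le_top, not_top_le hn, fun _ _ _ => rfl⟩, by simpa using he⟩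

theorem fl_zero {S : Finset V3} {n : V3} (hn : n ≠ 0) {ε : ℝ} {f : V3 → ℝ} {w y : V3}
    (he : f =ᶠ[nhds y] fun _ => 0) : Fl S n ε f w y :=
  ⟨∅, by simp, 0, zero_mem _, by simp, fun s hs => by simp at hs, fun _ => 0,
    FlipU.mk0 hn (BM.const 0) le_top (not_top_le hn) (fun _ _ _ => rfl) he⟩

theorem sign_K {S : Finset V3} {n y : V3} (h : ∀ p ∈ cone S, 0 ≤ ⟪n, p⟫_ℝ) (hy : y ∈ cone S)
    (hyn : y ∈ pl n) : ∀ p ∈ cone (act S y), 0 ≤ ⟪n, p⟫_ℝ := by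
  intro p hp
  obtain ⟨δ, hδ, h1⟩ := small_move hy hp
  have h2 := h _ (h1 (δ / 2) (by linarith) (by linarith))
  rw [inner_add_right, inner_smul_right, mem_pl.1 hyn, zero_add] at h2
  exact nonneg_of_mul_nonneg_right h2 (half_pos hδ)

theorem sign_K' {S : Finset V3} {n y : V3} (h : ∀ p ∈ cone S, ⟪n, p⟫_ℝ ≤ 0) (hy : y ∈ cone S)
    (hyn : y ∈ pl n) : ∀ p ∈ cone (act S y), ⟪n, p⟫_ℝ ≤ 0 := by
  intro p hp
  have := sign_K (n := -n) (S := S) (by simpa using h) hy (by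
    rw [mem_pl]; simpa using mem_pl.1 hyn) p hp
  simpa using this

theorem cone_scale {I : Finset V3} {s : ℝ} (hs : 0 < s) (q : V3) : s • q ∈ cone I ↔ q ∈ cone I := by
  refine forall₂_congr fun t _ => ?_
  rw [inner_smul_right]
  exact ⟨fun h => nonpos_of_mul_nonpos_right h hs, fun h => mul_nonpos_of_nonneg_of_nonpos hs.le h⟩

theorem nonpos_scale {s x : ℝ} (hs : 0 < s) : s * x ≤ 0 ↔ x ≤ 0 :=
  ⟨fun h => nonpos_of_mul_nonpos_right h hs, fun h => mul_nonpos_of_nonneg_of_nonpos hs.le h⟩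

theorem int_ball {S : Finset V3} (hS : GC S) : ∃ w0 : V3, ∃ ρ > 0, ∀ q ∈ Metric.ball w0 ρ, q ∈ cone S := by
  obtain ⟨p0, hp0⟩ := hS.int
  have hm : p0 ∈ cone S := fun s hs => (hp0 s hs).le
  obtain ⟨ρ, hρ, h⟩ := Metric.eventually_nhds_iff.1 (eventually_cone hm)
  refine ⟨p0, ρ, hρ, fun q hq => (h hq).2 fun s hs => ?_⟩
  have := hp0 s (mem_act.1 hs).1
  rw [(mem_act.1 hs).2] at this
  exact absurd this (lt_irrefl 0)

theorem one_above {S : Finset V3} (hS : GC S) {n : V3} (hn : n ≠ 0)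
    (h : ∀ p ∈ cone S, 0 ≤ ⟪n, p⟫_ℝ) : One S n 1 := by
  intro y hyn hy _ f hf
  refine ⟨ind (cone (act S y)), ⟨BM_ind_cone _, ind_nonneg, ?_, ?_, ?_⟩, fun _ => ⟨?_, ?_⟩⟩
  · intro p hp
    exact ind_of_not_mem fun h' => absurd (sign_K h hy hyn p h') (not_le.2 hp)
  · exact fun p v hv => ind_inv p v hv.1
  · exact ⟨fun _ => 0, fun _ => 0, BM.const 0, BM.const 0,
      ⟨⊤, le_top, not_top_le hn, fun _ _ _ => rfl⟩,
      ⟨⊤, le_top, not_top_le hn, fun _ _ _ => rfl⟩, by simpa using hf⟩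
  · exact fun s hs q => ind_congr (cone_scale hs q)
  · obtain ⟨w0, ρ, hρ, h1⟩ := int_ball hS
    exact ⟨w0, ρ, hρ, fun q hq => (ind_of_mem (cone_sub_act S y (h1 q hq))).ge⟩

theorem act_split {S : Finset V3} {y w s : V3} (hw : w ∈ cone S) (hyw : y - w ∈ cone S)
    (hs : s ∈ act S y) : s ∈ act S (y - w) ∧ s ∈ act S w := by
  have hs' := mem_act.1 hs
  have h1 := hw s hs'.1
  have h2 := hyw s hs'.1
  have h3 : ⟪s, y - w⟫_ℝ = ⟪s, y⟫_ℝ - ⟪s, w⟫_ℝ := inner_sub_right _ _ _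
  exact ⟨mem_act.2 ⟨hs'.1, by linarith [hs'.2]⟩, mem_act.2 ⟨hs'.1, by linarith [hs'.2]⟩⟩

theorem two_above {S : Finset V3} {n : V3} (hn : n ≠ 0)
    (h : ∀ p ∈ cone S, 0 ≤ ⟪n, p⟫_ℝ) {w : V3} (hw : w ∈ cone S) (hL : LS (act S w) = pl n) :
    Two S n 1 w := by
  intro y hyn hy hyw hne f hf
  have hwn : w ∈ pl n := hL ▸ self_mem_LS S w
  have hwL : w ∈ LS (act S y) := fun s hs => (mem_act.1 (act_split hw hyw hs).2).2
  have hsub : act S y ⊆ act S (y - w) := fun s hs => (act_split hw hyw hs).1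
  have hKK : cone (act S (y - w)) ⊆ cone (act S y) := fun p hp s hs => hp s (hsub hs)
  refine ⟨act S (y - w), fun s hs => (mem_act.1 hs).1, w, hwn, le_rfl, self_mem_LS S _,
    fun p => ind (cone (act S y)) (p - w) - ind (cone (act S (y - w))) (p - w), ?_, ?_, ?_, ?_, ?_⟩
  · exact ((BM_ind_cone _).shift w).sub ((BM_ind_cone _).shift w)
  · intro p
    by_cases h1 : p - w ∈ cone (act S (y - w))
    · simp [ind_of_mem h1, ind_of_mem (hKK h1)]
    · simp [ind_of_not_mem h1, ind_nonneg]
  · intro p hp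
    have h2 : p - w ∉ cone (act S y) := fun h' => by
      have := sign_K h hy hyn _ h'
      rw [inner_sub_right, mem_pl.1 hwn] at this
      linarith
    simp [ind_of_not_mem h2, ind_of_not_mem fun h' => h2 (hKK h')]
  · intro p v hv
    have e : p + v - w = (p - w) + v := by abel
    simp only [e]
    rw [ind_inv _ v hv.1, ind_inv _ v (fun s hs => hv.1 s (hsub hs))]
  · refine ⟨fun _ => 0, fun _ => 0, BM.const 0, BM.const 0,
      ⟨⊤, le_top, not_top_le hn, fun _ _ _ => rfl⟩,
      ⟨⊤, le_top, not_top_le hn, fun _ _ _ => rfl⟩, ?_⟩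
    filter_upwards [hf] with p hp
    rw [hp]
    have := ind_inv (I := act S y) (p - w) w hwL
    rw [sub_add_cancel] at this
    rw [this]; ring

structure WD (S : Finset V3) (n y s1 s2 : V3) (l m : ℝ) : Prop where
  m1 : s1 ∈ act S y
  m2 : s2 ∈ act S y
  iff : ∀ p, p ∈ cone (act S y) ↔ ⟪s1, p⟫_ℝ ≤ 0 ∧ ⟪s2, p⟫_ℝ ≤ 0
  surj : ∀ a b : ℝ, ∃ p : V3, ⟪s1, p⟫_ℝ = a ∧ ⟪s2, p⟫_ℝ = b
  coeff : ∀ p, ⟪n, p⟫_ℝ = l * (-⟪s1, p⟫_ℝ) + m * (-⟪s2, p⟫_ℝ)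
  ker : ∀ p, ⟪s1, p⟫_ℝ = 0 → ⟪s2, p⟫_ℝ = 0 → p ∈ Submodule.span ℝ {y}

theorem WD.swap {S : Finset V3} {n y s1 s2 : V3} {l m : ℝ} (h : WD S n y s1 s2 l m) :
    WD S n y s2 s1 m l where
  m1 := h.m2
  m2 := h.m1
  iff p := by rw [h.iff, and_comm]
  surj a b := by
    obtain ⟨p, h1, h2⟩ := h.surj b a
    exact ⟨p, h2, h1⟩
  coeff p := by rw [h.coeff]; ring
  ker p a b := h.ker p b a

theorem WD_ex {S : Finset V3} (hS : GC S) {n y : V3} (he : EdgeVec S y) (hyn : y ∈ pl n) :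
    ∃ s1 s2 l m, WD S n y s1 s2 l m := by
  obtain ⟨s1, h1, s2, h2, hi, hk⟩ := wedge hS he
  obtain ⟨l, m, hc⟩ := wedge_coeff hyn hk
  exact ⟨s1, s2, l, m, h1, h2, hi, wedge_surj he.2.1 hk, hc, hk⟩

theorem WD.n_ne {S : Finset V3} {n y s1 s2 : V3} {l m : ℝ} (h : WD S n y s1 s2 l m) (hn : n ≠ 0) :
    ¬ (l = 0 ∧ m = 0) := by
  rintro ⟨rfl, rfl⟩
  have := h.coeff n
  simp at this
  exact hn this

theorem WD.pl1 {S : Finset V3} {n y s1 s2 : V3} {l m : ℝ} (h : WD S n y s1 s2 l m) (hm : m ≠ 0) :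
    ¬ pl s1 ≤ pl n := by
  intro hle
  obtain ⟨p, h1, h2⟩ := h.surj 0 1
  have := mem_pl.1 (hle (mem_pl.2 h1))
  rw [h.coeff, h1, h2] at this
  simp at this
  exact hm this

theorem LSy_le {S : Finset V3} {y s : V3} (hs : s ∈ act S y) : LS (act S y) ≤ pl s :=
  fun _ hv => mem_pl.2 (hv s hs)

theorem mble_le (s : V3) : MeasurableSet {p : V3 | ⟪s, p⟫_ℝ ≤ 0} :=
  measurableSet_le (by fun_prop) measurable_const

theorem mble_lt (s : V3) : MeasurableSet {p : V3 | 0 < ⟪s, p⟫_ℝ} :=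
  measurableSet_lt measurable_const (by fun_prop)

theorem cont_inner (s : V3) : Continuous fun p : V3 => ⟪s, p⟫_ℝ := by fun_prop

theorem inv_ind {X : Set V3} {L : Submodule ℝ V3} (h : ∀ p, ∀ v ∈ L, (p + v ∈ X ↔ p ∈ X)) :
    Inv (ind X) L := fun p v hv => ind_congr (h p v hv)

/-- the cut flip -/
theorem one_cut {S : Finset V3} {n y s1 s2 : V3} {l m : ℝ} (hn : n ≠ 0) (h : WD S n y s1 s2 l m)
    (hl : 0 ≤ l) (hm : m < 0) {f : V3 → ℝ} (hf : f =ᶠ[nhds y] ind (cone (act S y))) :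
    ∃ u, FlipU n (-1) f y (LS (act S y) ⊓ pl n) u ∧ (EdgeVec S y → Strong u) := by
  refine ⟨ind ({p | ⟪s1, p⟫_ℝ ≤ 0} ∩ {p | 0 < ⟪s2, p⟫_ℝ}), ⟨BM_ind ((mble_le s1).inter (mble_lt s2)),
    ind_nonneg, ?_, ?_, ?_⟩, fun _ => ⟨?_, ?_⟩⟩
  · intro p hp
    refine ind_of_not_mem ?_
    rintro ⟨h1, h2⟩
    simp only [Set.mem_ofPred_eq] at h1 h2
    rw [h.coeff] at hp
    nlinarith
  · refine inv_ind fun p v hv => ?_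
    simp only [Set.mem_inter_iff, Set.mem_ofPred_eq, inner_add_right, hv.1 s1 h.m1, hv.1 s2 h.m2,
      add_zero]
  · refine ⟨ind {p | ⟪s1, p⟫_ℝ ≤ 0}, fun _ => 0, BM_ind (mble_le s1), BM.const 0,
      ⟨pl s1, inf_le_left.trans (LSy_le h.m1), h.pl1 hm.ne, inv_ind fun p v hv => ?_⟩,
      ⟨⊤, le_top, not_top_le hn, fun _ _ _ => rfl⟩, ?_⟩
    · simp only [Set.mem_ofPred_eq, inner_add_right, mem_pl.1 hv, add_zero]
    · filter_upwards [hf] with p hp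
      rw [hp]
      have := h.iff p
      by_cases a : ⟪s1, p⟫_ℝ ≤ 0
      · rw [ind_of_mem (show p ∈ {p | ⟪s1, p⟫_ℝ ≤ 0} from a)]
        by_cases b : ⟪s2, p⟫_ℝ ≤ 0
        · rw [ind_of_mem (this.2 ⟨a, b⟩), ind_of_not_mem (fun hh => absurd hh.2 (not_lt.2 b))]
          norm_num
        · rw [ind_of_not_mem (fun hh => b (this.1 hh).2), ind_of_mem (show p ∈ {p | ⟪s1, p⟫_ℝ ≤ 0} ∩
            {p | 0 < ⟪s2, p⟫_ℝ} from ⟨a, not_le.1 b⟩)]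
          norm_num
      · rw [ind_of_not_mem (show p ∉ {p | ⟪s1, p⟫_ℝ ≤ 0} from a),
          ind_of_not_mem (fun hh => a (this.1 hh).1), ind_of_not_mem (fun hh => a hh.1)]
        norm_num
  · intro s hs q
    refine ind_congr ?_
    simp only [Set.mem_inter_iff, Set.mem_ofPred_eq, inner_smul_right]
    rw [mul_pos_iff_of_pos_left hs, nonpos_scale hs]
  · obtain ⟨p, h1, h2⟩ := h.surj (-1) 1
    have e1 := ((cont_inner s1).tendsto p).eventually (gt_mem_nhds (show ⟪s1, p⟫_ℝ < 0 by linarith))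
    have e2 := ((cont_inner s2).tendsto p).eventually (lt_mem_nhds (show 0 < ⟪s2, p⟫_ℝ by linarith))
    obtain ⟨ρ, hρ, h3⟩ := Metric.eventually_nhds_iff.1 (e1.and e2)
    exact ⟨p, ρ, hρ, fun q hq => (ind_of_mem (show q ∈ {p | ⟪s1, p⟫_ℝ ≤ 0} ∩ {p | 0 < ⟪s2, p⟫_ℝ} from
      ⟨(h3 hq).1.le, (h3 hq).2⟩)).ge⟩

theorem one_below {S : Finset V3} {n y s1 s2 : V3} {l m : ℝ} (h : WD S n y s1 s2 l m)
    (hl : l < 0) (hm : m < 0) {f : V3 → ℝ} (hf : f =ᶠ[nhds y] ind (cone (act S y))) :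
    ∃ u, FlipU n 1 f y (LS (act S y) ⊓ pl n) u ∧ (EdgeVec S y → Strong u) := by
  refine ⟨ind ({p | 0 < ⟪s1, p⟫_ℝ} ∩ {p | 0 < ⟪s2, p⟫_ℝ}), ⟨BM_ind ((mble_lt s1).inter (mble_lt s2)),
    ind_nonneg, ?_, ?_, ?_⟩, fun _ => ⟨?_, ?_⟩⟩
  · intro p hp
    refine ind_of_not_mem ?_
    rintro ⟨h1, h2⟩
    simp only [Set.mem_ofPred_eq] at h1 h2
    rw [h.coeff] at hp
    nlinarith
  · refine inv_ind fun p v hv => ?_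
    simp only [Set.mem_inter_iff, Set.mem_ofPred_eq, inner_add_right, hv.1 s1 h.m1, hv.1 s2 h.m2,
      add_zero]
  · refine ⟨ind {p | ⟪s1, p⟫_ℝ ≤ 0}, fun p => -1 * ind {p | 0 < ⟪s2, p⟫_ℝ} p, BM_ind (mble_le s1),
      (BM_ind (mble_lt s2)).cmul _,
      ⟨pl s1, inf_le_left.trans (LSy_le h.m1), h.pl1 hm.ne, inv_ind fun p v hv => ?_⟩,
      ⟨pl s2, inf_le_left.trans (LSy_le h.m2), h.swap.pl1 hl.ne, fun p v hv => ?_⟩, ?_⟩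
    · simp only [Set.mem_ofPred_eq, inner_add_right, mem_pl.1 hv, add_zero]
    · refine congrArg (fun t => -1 * t) (ind_congr ?_)
      simp only [Set.mem_ofPred_eq, inner_add_right, mem_pl.1 hv, add_zero]
    · filter_upwards [hf] with p hp
      rw [hp]
      have := h.iff p
      by_cases a : ⟪s1, p⟫_ℝ ≤ 0 <;> by_cases b : ⟪s2, p⟫_ℝ ≤ 0
      · rw [ind_of_mem (this.2 ⟨a, b⟩), ind_of_not_mem (fun hh => absurd hh.2 (not_lt.2 b)),
          ind_of_mem (show p ∈ {p | ⟪s1, p⟫_ℝ ≤ 0} from a),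
          ind_of_not_mem (show p ∉ {p | 0 < ⟪s2, p⟫_ℝ} from not_lt.2 b)]
        norm_num
      · rw [ind_of_not_mem (fun hh => b (this.1 hh).2),
          ind_of_not_mem (fun hh => absurd hh.1 (not_lt.2 a)),
          ind_of_mem (show p ∈ {p | ⟪s1, p⟫_ℝ ≤ 0} from a),
          ind_of_mem (show p ∈ {p | 0 < ⟪s2, p⟫_ℝ} from not_le.1 b)]
        norm_num
      · rw [ind_of_not_mem (fun hh => a (this.1 hh).1),
          ind_of_not_mem (fun hh => absurd hh.2 (not_lt.2 b)),
          ind_of_not_mem (show p ∉ {p | ⟪s1, p⟫_ℝ ≤ 0} from a),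
          ind_of_not_mem (show p ∉ {p | 0 < ⟪s2, p⟫_ℝ} from not_lt.2 b)]
        norm_num
      · rw [ind_of_not_mem (fun hh => a (this.1 hh).1),
          ind_of_mem (show p ∈ {p | 0 < ⟪s1, p⟫_ℝ} ∩ {p | 0 < ⟪s2, p⟫_ℝ} from
            ⟨not_le.1 a, not_le.1 b⟩),
          ind_of_not_mem (show p ∉ {p | ⟪s1, p⟫_ℝ ≤ 0} from a),
          ind_of_mem (show p ∈ {p | 0 < ⟪s2, p⟫_ℝ} from not_le.1 b)]
        norm_num
  · intro s hs q
    refine ind_congr ?_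
    simp only [Set.mem_inter_iff, Set.mem_ofPred_eq, inner_smul_right]
    rw [mul_pos_iff_of_pos_left hs, mul_pos_iff_of_pos_left hs]
  · obtain ⟨p, h1, h2⟩ := h.surj 1 1
    have e1 := ((cont_inner s1).tendsto p).eventually (lt_mem_nhds (show 0 < ⟪s1, p⟫_ℝ by linarith))
    have e2 := ((cont_inner s2).tendsto p).eventually (lt_mem_nhds (show 0 < ⟪s2, p⟫_ℝ by linarith))
    obtain ⟨ρ, hρ, h3⟩ := Metric.eventually_nhds_iff.1 (e1.and e2)
    exact ⟨p, ρ, hρ, fun q hq => (ind_of_mem (show q ∈ {p | 0 < ⟪s1, p⟫_ℝ} ∩ {p | 0 < ⟪s2, p⟫_ℝ} from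
      ⟨(h3 hq).1, (h3 hq).2⟩)).ge⟩

theorem facet_of_WD {S : Finset V3} {n y s1 s2 : V3} {m : ℝ} (hn : n ≠ 0) (hy : y ∈ cone S)
    (h : WD S n y s1 s2 0 m) : Fac S n := by
  have hm : m ≠ 0 := fun hm => h.n_ne hn ⟨rfl, hm⟩
  have hH : ∀ v, ⟪s2, v⟫_ℝ = 0 ↔ v ∈ pl n := fun v => by
    rw [mem_pl, h.coeff]; simp [hm]
  obtain ⟨p, h1, h2⟩ := h.surj (-1) 0
  have hp : p ∈ cone (act S y) := (h.iff p).2 ⟨by linarith, h2.le⟩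
  obtain ⟨δ, hδ, hmv⟩ := small_move hy hp
  refine ⟨y + (δ / 3) • p, hmv _ (by linarith) (by linarith), le_antisymm ?_ ?_⟩
  · intro v hv
    rw [← hH]
    refine hv s2 (mem_act.2 ⟨(mem_act.1 h.m2).1, ?_⟩)
    rw [inner_add_right, inner_smul_right, h2, (mem_act.1 h.m2).2]; simp
  · intro v hv s hs
    have hs' := mem_act.1 hs
    rw [inner_add_right, inner_smul_right] at hs'
    have a1 := hmv (2 * (δ / 3)) (by linarith) (by linarith) s hs'.1
    have a2 := hy s hs'.1
    rw [inner_add_right, inner_smul_right] at a1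
    have a3 : ⟪s, y⟫_ℝ = 0 := by linarith [hs'.2]
    have a4 : ⟪s, p⟫_ℝ = 0 := by
      have := hs'.2
      rw [a3, zero_add] at this
      rcases mul_eq_zero.1 this with h | h
      · linarith
      · exact h
    have hsy : s ∈ act S y := mem_act.2 ⟨hs'.1, a3⟩
    have hv2 : ⟪s2, v⟫_ℝ = 0 := (hH v).2 hv
    have key : ∀ c : ℝ, |c * ⟪s1, v⟫_ℝ| ≤ 1 → c * ⟪s, v⟫_ℝ ≤ 0 := by
      intro c hc
      have := (h.iff (p + c • v)).2 ⟨by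
        rw [inner_add_right, inner_smul_right, h1]; linarith [le_abs_self (c * ⟪s1, v⟫_ℝ)], by
        rw [inner_add_right, inner_smul_right, h2, hv2]; simp⟩ s hsy
      rw [inner_add_right, inner_smul_right, a4, zero_add] at this
      exact this
    set c := (|⟪s1, v⟫_ℝ| + 1)⁻¹ with hc
    have hpos : 0 < |⟪s1, v⟫_ℝ| + 1 := by positivity
    have hcp : 0 < c := inv_pos.2 hpos
    have hle : |c * ⟪s1, v⟫_ℝ| ≤ 1 := by
      rw [abs_mul, abs_of_pos hcp, hc, inv_mul_eq_div, div_le_one hpos]; linarith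
    have k1 := key c hle
    have k2 := key (-c) (by simpa [abs_mul] using hle)
    have : c * ⟪s, v⟫_ℝ = 0 := by linarith
    rcases mul_eq_zero.1 this with h | h
    · exact absurd h hcp.ne'
    · exact h

end CC

namespace CC
open scoped InnerProductSpace

theorem LS_S {S : Finset V3} (hS : GC S) : LS S = ⊥ := by
  rw [eq_bot_iff]
  intro v hv
  rw [Submodule.mem_bot]
  by_contra h0
  have h1 := hS.pos v (fun s hs => (hv s hs).le) h0
  have h2 := hS.pos (-v) (fun s hs => by rw [inner_neg_right, hv s hs]; simp) (neg_ne_zero.2 h0)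
  simp at h2
  linarith

theorem span_ne_pl {n y : V3} (hn : n ≠ 0) : Submodule.span ℝ {y} ≠ pl n := by
  intro h
  have h1 := finrank_pl hn
  rw [← h] at h1
  have := finrank_span_le_card (R := ℝ) ({y} : Set V3)
  simp at this
  omega

theorem fac_ne {S : Finset V3} (hS : GC S) {n w : V3} (hn : n ≠ 0) (h : LS (act S w) = pl n) :
    w ≠ 0 := by
  rintro rfl
  have : act S 0 = S := by ext s; simp [mem_act]
  rw [this, LS_S hS] at h
  have h1 := finrank_pl hn
  rw [← h] at h1
  simp at h1

theorem one_mk {S : Finset V3} (hS : GC S) {n : V3} (hn : n ≠ 0) {ε : ℝ}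
    (H : ∀ y s1 s2 l m, y ∈ pl n → EdgeVec S y → WD S n y s1 s2 l m → ∀ f : V3 → ℝ,
      f =ᶠ[nhds y] ind (cone (act S y)) →
      ∃ u, FlipU n ε f y (LS (act S y) ⊓ pl n) u ∧ (EdgeVec S y → Strong u))
    (H2 : ∀ y, y ∈ pl n → y ∈ cone S → y ≠ 0 → LS (act S y) = pl n → ∀ f : V3 → ℝ,
      f =ᶠ[nhds y] ind (cone (act S y)) →
      ∃ u, FlipU n ε f y (LS (act S y) ⊓ pl n) u ∧ (EdgeVec S y → Strong u)) : One S n ε := by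
  intro y hyn hy h0 f hf
  by_cases h : LS (act S y) ≤ pl n
  · rcases dichotomy hn h (self_mem_LS S y) h0 with h1 | h1
    · obtain ⟨s1, s2, l, m, hw⟩ := WD_ex hS ⟨hy, h0, h1⟩ hyn
      exact H y s1 s2 l m hyn ⟨hy, h0, h1⟩ hw f hf
    · exact H2 y hyn hy h0 h1 f hf
  · refine ⟨_, FlipU.mk0 hn (BM_ind_cone _) inf_le_left h ind_inv hf, fun he => absurd ?_ h⟩
    rw [he.2.2]; simpa using hyn

theorem WD.nonpos {S : Finset V3} {n y s1 s2 : V3} {l m : ℝ} (h : WD S n y s1 s2 l m)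
    (hb : ∀ p ∈ cone S, ⟪n, p⟫_ℝ ≤ 0) (hy : y ∈ cone S) (hyn : y ∈ pl n) : l ≤ 0 := by
  obtain ⟨p, h1, h2⟩ := h.surj (-1) 0
  have := sign_K' hb hy hyn p ((h.iff p).2 ⟨by linarith, h2.le⟩)
  rw [h.coeff, h1, h2] at this
  linarith

theorem one_nonfacet {S : Finset V3} (hS : GC S) {n : V3} (hn : n ≠ 0) (hF : ¬ Fac S n) :
    ∃ ε : ℝ, (ε = 1 ∨ ε = -1) ∧ One S n ε := by
  by_cases hA : ∀ p ∈ cone S, 0 ≤ ⟪n, p⟫_ℝ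
  · exact ⟨1, Or.inl rfl, one_above hS hn hA⟩
  by_cases hB : ∀ p ∈ cone S, ⟪n, p⟫_ℝ ≤ 0
  · refine ⟨1, Or.inl rfl, one_mk hS hn ?_ fun y _ hy _ h => absurd ⟨y, hy, h⟩ hF⟩
    intro y s1 s2 l m hyn he h f hf
    refine one_below h (lt_of_le_of_ne (h.nonpos hB he.1 hyn) ?_)
      (lt_of_le_of_ne (h.swap.nonpos hB he.1 hyn) ?_) hf
    · rintro rfl
      exact hF (facet_of_WD hn he.1 h)
    · rintro rfl
      exact hF (facet_of_WD hn he.1 h.swap)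
  · refine ⟨-1, Or.inr rfl, one_mk hS hn ?_ fun y _ hy _ h => absurd ⟨y, hy, h⟩ hF⟩
    intro y s1 s2 l m hyn he h f hf
    push Not at hA hB
    obtain ⟨p, hp, hp1⟩ := hA
    obtain ⟨q, hq, hq1⟩ := hB
    have hp2 := (h.iff p).1 (cone_sub_act S y hp)
    have hq2 := (h.iff q).1 (cone_sub_act S y hq)
    rw [h.coeff] at hp1 hq1
    by_cases hl : 0 ≤ l
    · refine one_cut hn h hl ?_ hf
      by_contra hm
      nlinarith
    · refine one_cut hn h.swap ?_ (not_le.1 hl) hf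
      by_contra hm
      nlinarith

theorem par {n s : V3} (hn : n ≠ 0) (h : pl n ≤ pl s) : ∃ c : ℝ, s = c • n := by
  set c := ⟪n, s⟫_ℝ / ⟪n, n⟫_ℝ with hc
  have hnn : ⟪n, n⟫_ℝ ≠ 0 := inner_self_ne_zero.2 hn
  refine ⟨c, ?_⟩
  have h1 : ⟪n, s - c • n⟫_ℝ = 0 := by
    rw [inner_sub_right, inner_smul_right, hc]; field_simp; ring
  have h2 : ⟪s, s - c • n⟫_ℝ = 0 := mem_pl.1 (h (mem_pl.2 h1))
  have h3 : ⟪s - c • n, s - c • n⟫_ℝ = 0 := by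
    rw [inner_sub_left, inner_smul_left, h1, h2]; simp
  exact sub_eq_zero.1 (inner_self_eq_zero.1 h3)

theorem facet_sign {S : Finset V3} (hS : GC S) {n w : V3} (hn : n ≠ 0)
    (h : LS (act S w) = pl n) :
    (∀ p ∈ cone S, 0 ≤ ⟪n, p⟫_ℝ) ∨ (∀ p ∈ cone S, ⟪n, p⟫_ℝ ≤ 0) := by
  obtain ⟨s, hs⟩ := act_nonempty (S := S) (y := w) (by rw [h]; exact pl_ne_top hn)
  obtain ⟨c, rfl⟩ := par hn (h ▸ LSy_le hs)
  have hsS := (mem_act.1 hs).1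
  have hc : c ≠ 0 := by
    rintro rfl
    obtain ⟨p0, hp0⟩ := hS.int
    have := hp0 _ hsS
    simp at this
  rcases lt_or_gt_of_ne hc with hc | hc
  · left
    intro p hp
    have := hp _ hsS
    rw [inner_smul_left] at this
    simp at this
    nlinarith
  · right
    intro p hp
    have := hp _ hsS
    rw [inner_smul_left] at this
    simp at this
    nlinarith

theorem halfspace {S : Finset V3} (hS : GC S) {n y : V3} (hn : n ≠ 0)
    (hb : ∀ p ∈ cone S, ⟪n, p⟫_ℝ ≤ 0) (h : LS (act S y) = pl n) (p : V3) :
    p ∈ cone (act S y) ↔ ⟪n, p⟫_ℝ ≤ 0 := by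
  have key : ∀ s ∈ act S y, (⟪s, p⟫_ℝ ≤ 0 ↔ ⟪n, p⟫_ℝ ≤ 0) := by
    intro s hs
    obtain ⟨c, rfl⟩ := par hn (h ▸ LSy_le hs)
    obtain ⟨p0, hp0⟩ := hS.int
    have h1 := hp0 _ (mem_act.1 hs).1
    have h2 := hb p0 fun s hs => (hp0 s hs).le
    rw [inner_smul_left] at h1 ⊢
    simp only [conj_trivial] at h1 ⊢
    exact nonpos_scale (by by_contra hc; nlinarith)
  obtain ⟨s, hs⟩ := act_nonempty (S := S) (y := y) (by rw [h]; exact pl_ne_top hn)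
  exact ⟨fun hp => (key s hs).1 (hp s hs), fun hp s hs => (key s hs).2 hp⟩

theorem WD.facet_zero {S : Finset V3} (hS : GC S) {n y w s1 s2 : V3} {l m : ℝ} (hn : n ≠ 0)
    (h : WD S n y s1 s2 l m) (hb : ∀ p ∈ cone S, ⟪n, p⟫_ℝ ≤ 0) (he : EdgeVec S y) (hyn : y ∈ pl n)
    (hw : w ∈ cone S) (hL : LS (act S w) = pl n) : (l = 0 ∧ m < 0) ∨ (m = 0 ∧ l < 0) := by
  have h1 := h.nonpos hb he.1 hyn
  have h2 := h.swap.nonpos hb he.1 hyn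
  have h3 := h.n_ne hn
  rcases h1.eq_or_lt with h1 | h1
  · exact Or.inl ⟨h1, lt_of_le_of_ne h2 fun h2 => h3 ⟨h1, h2⟩⟩
  rcases h2.eq_or_lt with h2 | h2
  · exact Or.inr ⟨h2, h1⟩
  exfalso
  have hwn : ⟪n, w⟫_ℝ = 0 := mem_pl.1 (hL ▸ self_mem_LS S w)
  have hk := (h.iff w).1 (cone_sub_act S y hw)
  rw [h.coeff] at hwn
  have a1 : ⟪s1, w⟫_ℝ = 0 := by
    by_contra hne
    have := lt_of_le_of_ne hk.1 hne
    nlinarith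
  have a2 : ⟪s2, w⟫_ℝ = 0 := by
    by_contra hne
    have := lt_of_le_of_ne hk.2 hne
    nlinarith
  obtain ⟨c, rfl⟩ := Submodule.mem_span_singleton.1 (h.ker w a1 a2)
  have hc : c ≠ 0 := by
    rintro rfl
    exact fac_ne hS hn hL (zero_smul _ _)
  rw [act_smul S y hc, he.2.2] at hL
  exact span_ne_pl hn hL

theorem mble_ltn (n : V3) : MeasurableSet {p : V3 | 0 < ⟪n, p⟫_ℝ} := mble_lt n

theorem one_facet_below {S : Finset V3} (hS : GC S) {n w : V3} (hn : n ≠ 0)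
    (hb : ∀ p ∈ cone S, ⟪n, p⟫_ℝ ≤ 0) (hw : w ∈ cone S) (hL : LS (act S w) = pl n) :
    One S n (-1) := by
  refine one_mk hS hn ?_ ?_
  · intro y s1 s2 l m hyn he h f hf
    rcases h.facet_zero hS hn hb he hyn hw hL with ⟨h1, h2⟩ | ⟨h1, h2⟩
    · exact one_cut hn h h1.ge h2 hf
    · exact one_cut hn h.swap h1.ge h2 hf
  · intro y hyn hy h0 hLy f hf
    refine ⟨ind {p | 0 < ⟪n, p⟫_ℝ}, ⟨BM_ind (mble_lt n), ind_nonneg, ?_, ?_, ?_⟩,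
      fun he => absurd (he.2.2.symm.trans hLy) (span_ne_pl hn)⟩
    · exact fun p hp => ind_of_not_mem (show ¬ (0 < ⟪n, p⟫_ℝ) from not_lt.2 hp.le)
    · refine inv_ind fun p v hv => ?_
      simp only [Set.mem_ofPred_eq, inner_add_right, mem_pl.1 hv.2, add_zero]
    · refine ⟨fun _ => 1, fun _ => 0, BM.const 1, BM.const 0,
        ⟨⊤, le_top, not_top_le hn, fun _ _ _ => rfl⟩,
        ⟨⊤, le_top, not_top_le hn, fun _ _ _ => rfl⟩, ?_⟩
      filter_upwards [hf] with p hp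
      rw [hp]
      by_cases a : ⟪n, p⟫_ℝ ≤ 0
      · rw [ind_of_mem ((halfspace hS hn hb hLy p).2 a),
          ind_of_not_mem (show p ∉ {p | 0 < ⟪n, p⟫_ℝ} from not_lt.2 a)]
        norm_num
      · rw [ind_of_not_mem (fun h => a ((halfspace hS hn hb hLy p).1 h)),
          ind_of_mem (show p ∈ {p | 0 < ⟪n, p⟫_ℝ} from not_le.1 a)]
        norm_num

theorem two_wedge {S : Finset V3} {n y w s1 s2 : V3} {m : ℝ} (hn : n ≠ 0)
    (hwn : w ∈ pl n) (h : WD S n (y - w) s1 s2 0 m) (hm : m < 0)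
    {f : V3 → ℝ} (hK : ∀ p, p ∈ cone (act S y) ↔ ⟪n, p⟫_ℝ ≤ 0)
    (hf : f =ᶠ[nhds y] fun p => ind (cone (act S y)) p - ind (cone (act S (y - w))) (p - w)) :
    Fl S n (-1) f w y := by
  refine ⟨act S (y - w), fun s hs => (mem_act.1 hs).1, w, hwn, le_rfl, self_mem_LS S _,
    fun p => ind ({p | 0 < ⟪s1, p⟫_ℝ} ∩ {p | 0 < ⟪n, p⟫_ℝ}) (p - w), ?_, ?_, ?_, ?_, ?_⟩
  · exact (BM_ind ((mble_lt s1).inter (mble_lt n))).shift w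
  · exact fun p => ind_nonneg _
  · intro p hp
    refine ind_of_not_mem fun h' => ?_
    have := h'.2
    simp only [Set.mem_ofPred_eq, inner_sub_right, mem_pl.1 hwn] at this
    linarith
  · intro p v hv
    refine ind_congr ?_
    simp only [Set.mem_inter_iff, Set.mem_ofPred_eq, inner_sub_right, inner_add_right,
      hv.1 s1 h.m1, mem_pl.1 hv.2, add_zero]
  · refine ⟨fun p => ind {p | 0 < ⟪s1, p⟫_ℝ} (p - w), fun _ => 0, (BM_ind (mble_lt s1)).shift w,
      BM.const 0, ⟨pl s1, inf_le_left.trans (LSy_le h.m1), h.pl1 hm.ne, fun p v hv => ?_⟩,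
      ⟨⊤, le_top, not_top_le hn, fun _ _ _ => rfl⟩, ?_⟩
    · refine ind_congr ?_
      simp only [Set.mem_ofPred_eq, inner_sub_right, inner_add_right, mem_pl.1 hv, add_zero]
    · filter_upwards [hf] with p hp
      rw [hp]
      have e1 : ⟪n, p - w⟫_ℝ = ⟪n, p⟫_ℝ := by rw [inner_sub_right, mem_pl.1 hwn, sub_zero]
      have e2 : ⟪s2, p - w⟫_ℝ ≤ 0 ↔ ⟪n, p⟫_ℝ ≤ 0 := by
        rw [← e1, h.coeff (p - w)]
        have : 0 * -⟪s1, p - w⟫_ℝ + m * -⟪s2, p - w⟫_ℝ = (-m) * ⟪s2, p - w⟫_ℝ := by ring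
        rw [this, nonpos_scale (by linarith)]
      have e3 := h.iff (p - w)
      rw [e2] at e3
      by_cases a : 0 < ⟪s1, p - w⟫_ℝ
      · rw [ind_of_not_mem (X := cone (act S (y - w))) (fun hh => absurd (e3.1 hh).1 (not_le.2 a)),
          ind_of_mem (show p - w ∈ {p | 0 < ⟪s1, p⟫_ℝ} from a)]
        by_cases b : ⟪n, p⟫_ℝ ≤ 0
        · rw [ind_of_mem ((hK p).2 b), ind_of_not_mem fun hh => absurd hh.2 (not_lt.2 (e1.trans_le b))]
          norm_num
        · rw [ind_of_not_mem fun hh => b ((hK p).1 hh), ind_of_mem (show p - w ∈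
            {p | 0 < ⟪s1, p⟫_ℝ} ∩ {p | 0 < ⟪n, p⟫_ℝ} from ⟨a, (not_le.1 b).trans_eq e1.symm⟩)]
          norm_num
      · rw [ind_of_not_mem (X := {p | 0 < ⟪s1, p⟫_ℝ} ∩ {p | 0 < ⟪n, p⟫_ℝ}) (fun hh => a hh.1),
          ind_of_not_mem (show p - w ∉ {p | 0 < ⟪s1, p⟫_ℝ} from a)]
        have : ind (cone (act S y)) p = ind (cone (act S (y - w))) (p - w) :=
          ind_congr ((hK p).trans (e3.trans ⟨fun h => h.2, fun h => ⟨not_lt.1 a, h⟩⟩).symm)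
        rw [this]
        norm_num

theorem two_facet_below {S : Finset V3} (hS : GC S) {n w : V3} (hn : n ≠ 0)
    (hb : ∀ p ∈ cone S, ⟪n, p⟫_ℝ ≤ 0) (hw : w ∈ cone S) (hL : LS (act S w) = pl n) :
    Two S n (-1) w := by
  intro y hyn hy hyw hne f hf
  have hwn : w ∈ pl n := hL ▸ self_mem_LS S w
  have hsub : ∀ v ∈ pl n, act S w ⊆ act S v := fun v hv s hs => by
    refine mem_act.2 ⟨(mem_act.1 hs).1, ?_⟩
    rw [← hL] at hv
    exact hv s hs
  have hLy : LS (act S y) = pl n := by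
    refine le_antisymm ?_ ?_
    · rw [← hL]
      exact fun v hv s hs => hv s (hsub y hyn hs)
    · rw [← hL]
      exact fun v hv s hs => hv s (act_split hw hyw hs).2
  have hy'n : y - w ∈ pl n := sub_mem hyn hwn
  have hL' : LS (act S (y - w)) ≤ pl n := by
    rw [← hL]
    exact fun v hv s hs => hv s (hsub _ hy'n hs)
  rcases dichotomy hn hL' (self_mem_LS S _) hne with h1 | h1
  · have he : EdgeVec S (y - w) := ⟨hyw, hne, h1⟩
    obtain ⟨s1, s2, l, m, h⟩ := WD_ex hS he hy'n
    rcases h.facet_zero hS hn hb he hy'n hw hL with ⟨rfl, h2⟩ | ⟨rfl, h2⟩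
    · exact two_wedge hn hwn h h2 (halfspace hS hn hb hLy) hf
    · exact two_wedge hn hwn h.swap h2 (halfspace hS hn hb hLy) hf
  · refine fl_zero hn ?_
    filter_upwards [hf] with p hp
    rw [hp, sub_eq_zero]
    refine ind_congr ?_
    rw [halfspace hS hn hb hLy, halfspace hS hn hb h1, inner_sub_right, mem_pl.1 hwn, sub_zero]

/-- Output of the local analysis for one cone. -/
structure TOut (S : Finset V3) (n : V3) (κ ε : ℝ) (w : V3) : Prop where
  cfg : Cfg S n κ w
  wn : w ∈ pl n
  wc : w ∈ cone S
  sg : ε = 1 ∨ ε = -1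
  fl : ∀ y ∈ pl n, ‖w‖ < ‖y‖ → Fl S n ε (fd S κ w) w y
  st : ∀ r ∈ pl n, EdgeVec S r →
    ∃ u, FlipU n ε (fd S κ w) r (LS (act S r) ⊓ pl n) u ∧ Strong u

theorem Fl_of_One {S : Finset V3} {n : V3} {ε : ℝ} (h : One S n ε) {y w : V3} (hyn : y ∈ pl n)
    (hy : y ∈ cone S) (h0 : y ≠ 0) {f : V3 → ℝ} (hf : f =ᶠ[nhds y] ind (cone (act S y))) :
    Fl S n ε f w y := by
  obtain ⟨u, hu, _⟩ := h y hyn hy h0 f hf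
  exact ⟨act S y, fun s hs => (mem_act.1 hs).1, 0, zero_mem _, by simp,
    by simpa using self_mem_LS S y, u, hu⟩

theorem ev_shift {S : Finset V3} {y w : V3} (h : y - w ∈ cone S) :
    (fun p => ind (cone S) (p - w)) =ᶠ[nhds y] fun p => ind (cone (act S (y - w))) (p - w) := by
  have hc : Continuous fun p : V3 => p - w := by fun_prop
  exact (hc.tendsto y).eventually (ev_ind h)

theorem ev_shift_not {S : Finset V3} {y w : V3} (h : y - w ∉ cone S) :
    (fun p => ind (cone S) (p - w)) =ᶠ[nhds y] fun _ => 0 := by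
  have hc : Continuous fun p : V3 => p - w := by fun_prop
  exact (hc.tendsto y).eventually (ev_ind_not h)

theorem fd_not {S : Finset V3} {y w : V3} {κ : ℝ} (hy : y ∉ cone S) (hw : w ∈ cone S) :
    fd S κ w =ᶠ[nhds y] fun _ => 0 := by
  have h2 : y - w ∉ cone S := fun h => hy (by simpa using cone_add h hw)
  filter_upwards [ev_ind_not hy, ev_shift_not h2] with p h3 h4
  simp only [fd, h3, h4]; simp

theorem TOut_ex {S : Finset V3} (hS : GC S) {n : V3} (hn : n ≠ 0) {η : ℝ} (hη : 0 < η) :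
    ∃ κ ε w, ‖w‖ < η ∧ TOut S n κ ε w := by
  by_cases hF : Fac S n
  · obtain ⟨w1, hw1, hL1⟩ := hF
    have hw10 := fac_ne hS hn hL1
    have hpos : 0 < ‖w1‖ := norm_pos_iff.2 hw10
    obtain ⟨w, hw, hL, hwη⟩ : ∃ w, w ∈ cone S ∧ LS (act S w) = pl n ∧ ‖w‖ < η := by
      have hc : 0 < η / (2 * ‖w1‖) := by positivity
      refine ⟨(η / (2 * ‖w1‖)) • w1, cone_smul hw1 hc.le, by rwa [act_smul S w1 hc.ne'], ?_⟩
      rw [norm_smul, Real.norm_of_nonneg hc.le]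
      have : η / (2 * ‖w1‖) * ‖w1‖ = η / 2 := by field_simp
      linarith
    have hwn : w ∈ pl n := hL ▸ self_mem_LS S w
    obtain ⟨ε, hε, h1, h2⟩ : ∃ ε : ℝ, (ε = 1 ∨ ε = -1) ∧ One S n ε ∧ Two S n ε w := by
      rcases facet_sign hS hn hL with h | h
      · exact ⟨1, Or.inl rfl, one_above hS hn h, two_above hn h hw hL⟩
      · exact ⟨-1, Or.inr rfl, one_facet_below hS hn h hw hL, two_facet_below hS hn h hw hL⟩
    have hloc : ∀ y, y ∈ cone S → y - w ∉ cone S → fd S 1 w =ᶠ[nhds y] ind (cone (act S y)) := by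
      intro y hy hy'
      filter_upwards [ev_ind hy, ev_shift_not hy'] with p h3 h4
      simp only [fd, h3, h4]; simp
    refine ⟨1, ε, w, hwη, Or.inr ⟨rfl, hw, hL⟩, hwn, hw, hε, fun y hyn hwy => ?_, fun r hrn hr => ?_⟩
    · by_cases hy : y ∈ cone S
      · by_cases hy' : y - w ∈ cone S
        · refine h2 y hyn hy hy' ?_ _ ?_
          · intro h0
            rw [sub_eq_zero.1 h0] at hwy
            exact lt_irrefl _ hwy
          · filter_upwards [ev_ind hy, ev_shift hy'] with p h3 h4
            simp only [fd, h3, h4]; simp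
        · refine Fl_of_One h1 hyn hy ?_ (hloc y hy hy')
          rintro rfl
          simp at hwy
          exact absurd hwy (not_lt.2 (norm_nonneg _))
      · exact fl_zero hn (fd_not hy hw)
    · have hr' : r - w ∉ cone S := by
        intro hr'
        have hwr : w ∈ LS (act S r) := fun s hs => (mem_act.1 (act_split hw hr' hs).2).2
        rw [hr.2.2] at hwr
        obtain ⟨c, rfl⟩ := Submodule.mem_span_singleton.1 hwr
        have hc : c ≠ 0 := by
          rintro rfl
          exact fac_ne hS hn hL (zero_smul _ _)
        rw [act_smul S r hc, hr.2.2] at hL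
        exact span_ne_pl hn hL
      obtain ⟨u, hu, hs⟩ := h1 r hrn hr.1 hr.2.1 _ (hloc r hr.1 hr')
      exact ⟨u, hu, hs hr⟩
  · obtain ⟨ε, hε, h1⟩ := one_nonfacet hS hn hF
    have hfd : fd S 0 0 = ind (cone S) := by ext p; simp [fd]
    refine ⟨0, ε, 0, by simpa using hη, Or.inl ⟨rfl, rfl, hF⟩, zero_mem _, zero_mem_cone S, hε,
      fun y hyn hwy => ?_, fun r hrn hr => ?_⟩
    · rw [hfd]
      by_cases hy : y ∈ cone S
      · exact Fl_of_One h1 hyn hy (by rintro rfl; simp at hwy) (ev_ind hy)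
      · exact fl_zero hn (ev_ind_not hy)
    · rw [hfd]
      obtain ⟨u, hu, hs⟩ := h1 r hrn hr.1 hr.2.1 _ (ev_ind hr.1)
      exact ⟨u, hu, hs hr⟩

end CC

namespace CC
open scoped InnerProductSpace

/-- genericity of the point `x0` -/
structure GP (S T : Finset V3) (n x0 : V3) (δ : ℝ) : Prop where
  pos : 0 < δ
  mem : x0 ∈ pl n
  g1 : ∀ I ⊆ S, ∀ J ⊆ T, ∀ e, ‖e‖ < δ → x0 - e ∈ LS I ⊔ LS J → pl n ≤ LS I ⊔ LS J
  g2 : ∀ I ⊆ S, ∀ J ⊆ T, ∀ e, ‖e‖ < δ → x0 - e ∈ (LS I ⊓ pl n) ⊔ (LS J ⊓ pl n) →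
    pl n ≤ (LS I ⊓ pl n) ⊔ (LS J ⊓ pl n)

theorem act_sub (S : Finset V3) (y : V3) : act S y ⊆ S := fun _ hs => (mem_act.1 hs).1

theorem loc_const {T : Finset V3} {n x0 w z : V3} (hn : n ≠ 0) {κ δ : ℝ} (hc : Cfg T n κ w)
    (hwc : w ∈ cone T) (hwn : w ∈ pl n)
    (H : ∀ J ⊆ T, ∀ e, ‖e‖ < δ → x0 - e ∈ LS J → pl n ≤ LS J) (hw : ‖w‖ < δ / 2)
    (hz : ‖x0 - z‖ < δ / 2) : LocInv (fd T κ w) z ⊤ := by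
  by_cases hzc : z ∈ cone T
  swap
  · exact LocInv_of (fd_not hzc hwc) fun _ _ _ => rfl
  have hpos : 0 < δ := by linarith [norm_nonneg w]
  have hLz : pl n ≤ LS (act T z) :=
    H _ (act_sub T z) (x0 - z) (by linarith) (by simpa using self_mem_LS T z)
  rcases hc with ⟨rfl, rfl, hF⟩ | ⟨rfl, hw1, hL⟩
  · have hfd : fd T 0 0 = ind (cone T) := by ext p; simp [fd]
    rw [hfd]
    have : LS (act T z) = ⊤ :=
      top_of_pl hn hLz fun h => hF ⟨z, hzc, le_antisymm h hLz⟩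
    rw [← this]
    exact LocInv_mem hzc
  · have hP : ∀ l : ℝ, 0 ≤ l → l ≤ 1 → pl n ≤ LS (act T (z + l • (-w))) := by
      intro l h0 h1
      refine H _ (act_sub T _) (x0 - (z + l • (-w))) ?_ (by simpa using self_mem_LS T _)
      calc ‖x0 - (z + l • (-w))‖ = ‖(x0 - z) + l • w‖ := by congr 1; rw [smul_neg]; abel
        _ ≤ ‖x0 - z‖ + ‖l • w‖ := norm_add_le _ _
        _ ≤ ‖x0 - z‖ + ‖w‖ := by
          rw [norm_smul, Real.norm_of_nonneg h0]
          nlinarith [norm_nonneg w]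
        _ < δ := by linarith
    have hzw : z - w ∈ cone T := by
      by_contra hc
      obtain ⟨l, h0, h1, _, s, hs, hpos⟩ := exit_lemma (z := -w) hzc one_pos
        (by simpa [← sub_eq_add_neg] using hc)
      have := hP l h0 h1.le hwn s hs
      rw [inner_neg_right, this] at hpos
      simp at hpos
    have hP1 : pl n ≤ LS (act T (z - w)) := by
      have := hP 1 zero_le_one le_rfl
      simpa [← sub_eq_add_neg] using this
    have hact : act T (z - w) = act T z := by
      ext s
      constructor
      · intro hs
        have h1 := hP1 hwn s hs
        have h2 := mem_act.1 hs
        rw [inner_sub_right, h1, sub_zero] at h2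
        exact mem_act.2 h2
      · exact fun hs => (act_split hw1 hzw hs).1
    refine LocInv_of (g := fun _ => 0) ?_ fun _ _ _ => rfl
    filter_upwards [ev_ind hzc, ev_shift hzw] with p h3 h4
    simp only [fd, h3, h4, hact]
    have := ind_inv (I := act T z) (p - w) w (hLz hwn)
    rw [sub_add_cancel] at this
    rw [this]; ring

theorem BM_fd (S : Finset V3) (κ : ℝ) (w : V3) : BM (fd S κ w) :=
  (BM_ind_cone S).sub (((BM_ind_cone S).shift w).cmul κ)

theorem shift_inv (S : Finset V3) (y a : V3) :
    ∃ I ⊆ S, y - a ∈ LS I ∧ LocInv (fun p => ind (cone S) (p - a)) y (LS I) := by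
  by_cases h : y - a ∈ cone S
  · refine ⟨act S (y - a), act_sub S _, self_mem_LS S _, LocInv_of (ev_shift h) fun p v hv => ?_⟩
    have e : p + v - a = (p - a) + v := by abel
    simp only [e]
    exact ind_inv _ v hv
  · exact ⟨∅, by simp, fun s hs => by simp at hs, LocInv_of (ev_shift_not h) fun _ _ _ => rfl⟩

theorem shift_pair {S T : Finset V3} {n x0 y z : V3} (hn : n ≠ 0) {δ : ℝ} (G : GP S T n x0 δ)
    (hyz : y + z = x0) (hy : y ∉ pl n) {a a' : V3} (ha : a ∈ pl n)
    (hd : ‖a‖ < δ / 2) (hd' : ‖a'‖ < δ / 2) :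
    LocAll (CS x0) (fun p => ind (cone S) (p - a)) (fun p => ind (cone T) (p - a')) y := by
  obtain ⟨I, hI, h1, h2⟩ := shift_inv S y a
  obtain ⟨J, hJ, h3, h4⟩ := shift_inv T z a'
  refine lemmaB ((BM_ind_cone S).shift a) ((BM_ind_cone T).shift a') h2 h4 hyz ?_
  refine top_of_pl hn (G.g1 I hI J hJ (a + a') ?_ ?_) ?_
  · linarith [norm_add_le a a']
  · have : x0 - (a + a') = (y - a) + (z - a') := by rw [← hyz]; abel
    rw [this]
    exact Submodule.add_mem_sup h1 h3
  · intro h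
    refine hy ?_
    have := (pl n).add_mem (h (Submodule.mem_sup_left h1)) ha
    simpa using this

theorem pair_loc {S T : Finset V3} (hS : GC S) (hT : GC T) {n x0 y z : V3} (hn : n ≠ 0)
    {δ κ κ' ε ε' : ℝ} {w w' : V3} (G : GP S T n x0 δ) (H : TOut S n κ ε w) (H' : TOut T n κ' ε' w')
    (hw : ‖w‖ < δ / 2) (hw' : ‖w'‖ < δ / 2) (hyz : y + z = x0) :
    LocAll (CG (ε * ε') (fun x => ⟪n, x⟫_ℝ) x0) (fd S κ w) (fd T κ' w') y := by
  have hδ := G.pos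
  by_cases hy : y ∈ pl n
  swap
  · refine LocAll.mono (fun _ => CG_of_CS) (𝒞 := CS x0) ?_
    have z0 : ‖(0 : V3)‖ < δ / 2 := by simpa using hδ
    have b := BM_ind_cone S
    have b' := BM_ind_cone T
    have p1 := (shift_pair hn G hyz hy (zero_mem _) z0 z0).smul 1 1
    have p2 := (shift_pair hn G hyz hy (zero_mem _) z0 hw').smul 1 (-κ')
    have p3 := (shift_pair hn G hyz hy H.wn hw z0).smul (-κ) 1
    have p4 := (shift_pair hn G hyz hy H.wn hw hw').smul (-κ) (-κ')
    have q1 := LocAll.add_right (Cls_CS x0) ((b'.shift 0).cmul 1) ((b'.shift w').cmul (-κ'))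
      ((b.shift 0).cmul 1) p1 p2
    have q2 := LocAll.add_right (Cls_CS x0) ((b'.shift 0).cmul 1) ((b'.shift w').cmul (-κ'))
      ((b.shift w).cmul (-κ)) p3 p4
    have q := LocAll.add_left (Cls_CS x0) ((b.shift 0).cmul 1) ((b.shift w).cmul (-κ))
      (((b'.shift 0).cmul 1).add ((b'.shift w').cmul (-κ'))) q1 q2
    have e : fd S κ w = fun p => 1 * ind (cone S) (p - 0) + -κ * ind (cone S) (p - w) := by
      ext p; simp [fd]; ring
    have e' : fd T κ' w' = fun p => 1 * ind (cone T) (p - 0) + -κ' * ind (cone T) (p - w') := by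
      ext p; simp [fd]; ring
    rw [e, e']
    exact q
  have hz : z ∈ pl n := by
    have := sub_mem G.mem hy
    rwa [← hyz, add_sub_cancel_left] at this
  have triv : ∀ (f : V3 → ℝ) (p : V3), LocInv f p ⊥ := fun f p =>
    LocInv_of (Filter.EventuallyEq.refl _ _) fun q v hv => by
      rw [(Submodule.mem_bot ℝ).1 hv, add_zero]
  by_cases h1 : ‖y‖ < δ / 2
  · refine LocAll.mono (fun _ => CG_of_CS) (lemmaB (BM_fd _ _ _) (BM_fd _ _ _) (triv _ _)
      (loc_const hn H'.cfg H'.wc H'.wn (x0 := x0) (δ := δ) (fun J hJ e he hm => ?_) hw' ?_) hyz (by simp))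
    · have := G.g1 S subset_rfl J hJ e he (Submodule.mem_sup_right hm)
      rwa [LS_S hS, bot_sup_eq] at this
    · rwa [← hyz, add_sub_cancel_right]
  by_cases h2 : ‖z‖ < δ / 2
  · refine LocAll.mono (fun _ => CG_of_CS) (lemmaB (BM_fd _ _ _) (BM_fd _ _ _) 
      (loc_const hn H.cfg H.wc H.wn (x0 := x0) (δ := δ) (fun J hJ e he hm => ?_) hw ?_) (triv _ _) hyz (by simp))
    · have := G.g1 J hJ T subset_rfl e he (Submodule.mem_sup_left hm)
      rwa [LS_S hT, sup_bot_eq] at this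
    · rwa [← hyz, add_sub_cancel_left]
  obtain ⟨I, hI, a, ha, hal, hm, u, hu⟩ := H.fl y hy (by linarith)
  obtain ⟨J, hJ, a', ha', hal', hm', u', hu'⟩ := H'.fl z hz (by linarith)
  refine flip_CG hn hyz hu hu' (G.g2 I hI J hJ (a + a') ?_ ?_)
  · linarith [norm_add_le a a']
  · have : x0 - (a + a') = (y - a) + (z - a') := by rw [← hyz]; abel
    rw [this]
    exact Submodule.add_mem_sup ⟨hm, sub_mem hy ha⟩ ⟨hm', sub_mem hz ha'⟩


theorem quad_ev {A B C : ℝ} (h : ¬ (A = 0 ∧ B = 0 ∧ C = 0)) :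
    ∀ᶠ a in nhdsWithin (0 : ℝ) (Set.Ioi 0), A + a * B + a ^ 2 * C ≠ 0 := by
  by_cases hA : A = 0
  · by_cases hB : B = 0
    · have hC : C ≠ 0 := fun hC => h ⟨hA, hB, hC⟩
      filter_upwards [self_mem_nhdsWithin] with a ha
      have ha : 0 < a := ha
      simp [hA, hB, hC, ha.ne']
    · have hc : Continuous fun a : ℝ => B + a * C := by fun_prop
      have := (hc.tendsto' 0 B (by simp)).eventually_ne hB
      filter_upwards [self_mem_nhdsWithin, nhdsWithin_le_nhds this] with a ha h2
      have ha : 0 < a := ha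
      have : A + a * B + a ^ 2 * C = a * (B + a * C) := by rw [hA]; ring
      rw [this]
      exact mul_ne_zero ha.ne' h2
  · have hc : Continuous fun a : ℝ => A + a * B + a ^ 2 * C := by fun_prop
    exact nhdsWithin_le_nhds ((hc.tendsto' 0 A (by simp)).eventually_ne hA)

theorem avoid {n r t x : V3} (hx : ∀ q : V3, ⟪q, r⟫_ℝ = 0 → ⟪q, t⟫_ℝ = 0 → pl n ≤ pl q)
    (Q : Submodule ℝ V3) :
    ∀ᶠ a in nhdsWithin (0 : ℝ) (Set.Ioi 0), pl n ≤ Q ∨ x + a • r + a ^ 2 • t ∉ Q := by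
  by_cases h : pl n ≤ Q
  · exact Filter.Eventually.of_forall fun _ => Or.inl h
  obtain ⟨v, hv, hvQ⟩ := SetLike.not_le_iff_exists.1 h
  obtain ⟨q, hq, hqv⟩ : ∃ q ∈ Qᗮ, ⟪q, v⟫_ℝ ≠ 0 := by
    by_contra hc
    push Not at hc
    refine hvQ ?_
    rw [← Submodule.orthogonal_orthogonal Q, Submodule.mem_orthogonal]
    exact hc
  have h3 : ¬ (⟪q, x⟫_ℝ = 0 ∧ ⟪q, r⟫_ℝ = 0 ∧ ⟪q, t⟫_ℝ = 0) := by
    rintro ⟨_, h1, h2⟩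
    exact hqv (mem_pl.1 (hx q h1 h2 hv))
  filter_upwards [quad_ev h3] with a ha
  right
  intro hm
  have := Submodule.inner_left_of_mem_orthogonal hm hq
  rw [inner_add_right, inner_add_right, inner_smul_right, inner_smul_right] at this
  exact ha this

theorem robust (Q : Submodule ℝ V3) {n x0 : V3} (h : pl n ≤ Q ∨ x0 ∉ Q) :
    ∀ᶠ δ in nhdsWithin (0 : ℝ) (Set.Ioi 0), ∀ e : V3, ‖e‖ < δ → x0 - e ∈ Q → pl n ≤ Q := by
  rcases h with h | h
  · exact Filter.Eventually.of_forall fun _ _ _ _ => h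
  have hcl : IsClosed (Q : Set V3) := Submodule.closed_of_finiteDimensional Q
  obtain ⟨δ0, hδ0, hb⟩ := Metric.isOpen_iff.1 hcl.isOpen_compl x0 h
  filter_upwards [Ioo_mem_nhdsGT hδ0] with δ hδ e he hm
  exact absurd hm (hb (show x0 - e ∈ Metric.ball x0 δ0 by
    rw [Metric.mem_ball, dist_eq_norm]; simpa using he.trans hδ.2))

theorem generic (S T : Finset V3) {n r t : V3} (hr : r ∈ pl n) (ht : t ∈ pl n)
    (hx : ∀ q : V3, ⟪q, r⟫_ℝ = 0 → ⟪q, t⟫_ℝ = 0 → pl n ≤ pl q) {x : V3} (hxn : x ∈ pl n) :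
    ∀ᶠ a in nhdsWithin (0 : ℝ) (Set.Ioi 0), ∃ δ, GP S T n (x + a • r + a ^ 2 • t) δ := by
  classical
  have key : ∀ᶠ a in nhdsWithin (0 : ℝ) (Set.Ioi 0), ∀ I ∈ S.powerset, ∀ J ∈ T.powerset,
      (pl n ≤ LS I ⊔ LS J ∨ x + a • r + a ^ 2 • t ∉ LS I ⊔ LS J) ∧
      (pl n ≤ (LS I ⊓ pl n) ⊔ (LS J ⊓ pl n) ∨
        x + a • r + a ^ 2 • t ∉ (LS I ⊓ pl n) ⊔ (LS J ⊓ pl n)) := by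
    rw [Filter.eventually_all_finset]
    intro I _
    rw [Filter.eventually_all_finset]
    intro J _
    exact (avoid hx _).and (avoid hx _)
  filter_upwards [key] with a ha
  have k2 : ∀ᶠ δ in nhdsWithin (0 : ℝ) (Set.Ioi 0), ∀ I ∈ S.powerset, ∀ J ∈ T.powerset,
      (∀ e : V3, ‖e‖ < δ → x + a • r + a ^ 2 • t - e ∈ LS I ⊔ LS J → pl n ≤ LS I ⊔ LS J) ∧
      (∀ e : V3, ‖e‖ < δ → x + a • r + a ^ 2 • t - e ∈ (LS I ⊓ pl n) ⊔ (LS J ⊓ pl n) →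
        pl n ≤ (LS I ⊓ pl n) ⊔ (LS J ⊓ pl n)) := by
    rw [Filter.eventually_all_finset]
    intro I hI
    rw [Filter.eventually_all_finset]
    intro J hJ
    exact (robust _ (ha I hI J hJ).1).and (robust _ (ha I hI J hJ).2)
  obtain ⟨δ, h1, h2⟩ := (k2.and self_mem_nhdsWithin).exists
  exact ⟨δ, h2, add_mem (add_mem hxn (Submodule.smul_mem _ _ hr)) (Submodule.smul_mem _ _ ht),
    fun I hI J hJ => (h1 I (Finset.mem_powerset.2 hI) J (Finset.mem_powerset.2 hJ)).1,
    fun I hI J hJ => (h1 I (Finset.mem_powerset.2 hI) J (Finset.mem_powerset.2 hJ)).2⟩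

end CC

namespace CC
open scoped InnerProductSpace

theorem flat_taylor (k : ℕ) : ∀ ψ : ℝ → ℝ, ContDiffAt ℝ k ψ 0 → (∀ s < 0, ψ s = 0) →
    ∀ ε > 0, ∃ η > 0, ∀ s, 0 ≤ s → s < η → |ψ s| ≤ ε * s ^ k := by
  induction k with
  | zero =>
    intro ψ h h0 ε hε
    have hc : ContinuousAt ψ 0 := h.continuousAt
    have hz : ψ 0 = 0 := by
      have h1 : Filter.Tendsto ψ (nhdsWithin 0 (Set.Iio 0)) (nhds (ψ 0)) :=
        hc.tendsto.mono_left nhdsWithin_le_nhds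
      have h2 : Filter.Tendsto ψ (nhdsWithin 0 (Set.Iio 0)) (nhds 0) := by
        refine Filter.Tendsto.congr' ?_ tendsto_const_nhds
        filter_upwards [self_mem_nhdsWithin] with s hs
        exact (h0 s hs).symm
      exact tendsto_nhds_unique h1 h2
    obtain ⟨η, hη, h3⟩ := Metric.continuousAt_iff.1 hc ε hε
    refine ⟨η, hη, fun s hs hs' => ?_⟩
    have := h3 (x := s) (by rw [Real.dist_eq, sub_zero, abs_of_nonneg hs]; exact hs')
    rw [hz, Real.dist_eq, sub_zero] at this
    simpa using this.le
  | succ k ih =>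
    intro ψ h h0 ε hε
    have hd : ContDiffAt ℝ k (deriv ψ) 0 := by
      have h1 : ContDiffAt ℝ k (fderiv ℝ ψ) 0 := h.fderiv_right (by norm_cast)
      have h2 : ContDiffAt ℝ k (fun x => fderiv ℝ ψ x 1) 0 := h1.clm_apply contDiffAt_const
      simpa using h2
    have hd0 : ∀ s < 0, deriv ψ s = 0 := by
      intro s hs
      have : ψ =ᶠ[nhds s] fun _ => 0 := by
        filter_upwards [gt_mem_nhds hs] with x hx using h0 x hx
      rw [this.deriv_eq]; simp
    obtain ⟨η, hη, h1⟩ := ih _ hd hd0 ε hε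
    obtain ⟨η', hη', h2⟩ := Metric.eventually_nhds_iff.1
      ((h.of_le (m := 1) (by norm_cast; omega)).eventually (by simp))
    have hψ0 : ψ 0 = 0 := by
      have hc : ContinuousAt ψ 0 := h.continuousAt
      have h1 : Filter.Tendsto ψ (nhdsWithin 0 (Set.Iio 0)) (nhds (ψ 0)) :=
        hc.tendsto.mono_left nhdsWithin_le_nhds
      have h2 : Filter.Tendsto ψ (nhdsWithin 0 (Set.Iio 0)) (nhds 0) := by
        refine Filter.Tendsto.congr' ?_ tendsto_const_nhds
        filter_upwards [self_mem_nhdsWithin] with s hs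
        exact (h0 s hs).symm
      exact tendsto_nhds_unique h1 h2
    refine ⟨min η η', lt_min hη hη', fun s hs hs' => ?_⟩
    have hs1 := hs'.trans_le (min_le_left _ _)
    have hs2 := hs'.trans_le (min_le_right _ _)
    have := Convex.norm_image_sub_le_of_norm_deriv_le (𝕜 := ℝ) (f := ψ) (s := Set.Icc 0 s)
      (C := ε * s ^ k) (x := 0) (y := s) (fun x hx => ?_) (fun x hx => ?_) (convex_Icc 0 s)
      (Set.left_mem_Icc.2 hs) (Set.right_mem_Icc.2 hs)
    · rw [hψ0, sub_zero, sub_zero, Real.norm_eq_abs, Real.norm_of_nonneg hs] at this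
      rw [pow_succ]; linarith
    · exact (h2 (by rw [Real.dist_eq, sub_zero, abs_of_nonneg hx.1]; linarith [hx.2])).differentiableAt
        (by simp)
    · rw [Real.norm_eq_abs]
      refine (h1 x hx.1 (by linarith [hx.2])).trans ?_
      have := pow_le_pow_left₀ hx.1 hx.2 k
      nlinarith

theorem flat_contra {ψ : ℝ → ℝ} (h : ContDiffAt ℝ 3 ψ 0) (h0 : ∀ s < 0, ψ s = 0) {c η : ℝ}
    (hc : 0 < c) (hη : 0 < η) (hlow : ∀ s, 0 < s → s < η → c * s ^ 3 ≤ ψ s) : False := by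
  obtain ⟨η', hη', h1⟩ := flat_taylor 3 ψ h h0 (c / 2) (half_pos hc)
  set s := min η η' / 2 with hs
  have hm : 0 < min η η' := lt_min hη hη'
  have hs0 : 0 < s := half_pos hm
  have hs1 : s < min η η' := half_lt_self hm
  have a1 := hlow s hs0 (hs1.trans_le (min_le_left _ _))
  have a2 := h1 s hs0.le (hs1.trans_le (min_le_right _ _))
  have a3 := le_abs_self (ψ s)
  have : 0 < s ^ 3 := by positivity
  nlinarith

theorem second_edge {S : Finset V3} (hS : GC S) {r : V3} (hr : EdgeVec S r) :
    ∃ r2, EdgeVec S r2 ∧ r2 ∉ Submodule.span ℝ {r} := by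
  obtain ⟨y, hy, hyr⟩ : ∃ y ∈ cone S, y ∉ Submodule.span ℝ {r} := by
    by_contra hc
    push Not at hc
    obtain ⟨w0, ρ, hρ, hb⟩ := int_ball hS
    obtain ⟨v, hv⟩ := exists_not_mem_of_finrank (L := Submodule.span ℝ {r}) (by
      rw [finrank_span_singleton hr.2.1]; norm_num)
    have h1 := hc w0 (hb w0 (Metric.mem_ball_self hρ))
    have hv0 : 0 < ‖v‖ := norm_pos_iff.2 (by rintro rfl; exact hv (zero_mem _))
    have hc0 : 0 < ρ / (2 * ‖v‖) := by positivity
    have h2 := hc _ (hb (w0 + (ρ / (2 * ‖v‖)) • v) (by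
      rw [Metric.mem_ball, dist_eq_norm, add_sub_cancel_left, norm_smul, Real.norm_of_nonneg hc0.le]
      have : ρ / (2 * ‖v‖) * ‖v‖ = ρ / 2 := by field_simp
      linarith))
    have h3 := sub_mem h2 h1
    rw [add_sub_cancel_left] at h3
    exact hv ((Submodule.smul_mem_iff _ hc0.ne').1 h3)
  have hr2 : 0 < r 2 := hS.pos r hr.1 hr.2.1
  obtain ⟨l, hl0, _, hm, s, hs, hsr⟩ := exit_lemma (z := -r) (l0 := y 2 / r 2 + 1) hy
    (by have := hS.nonneg hy; positivity) (fun hmem => by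
      have := hS.nonneg hmem
      simp at this
      rw [add_mul, div_mul_cancel₀ _ hr2.ne'] at this
      linarith)
  set y1 := y + l • (-r) with hy1
  have hy1r : y1 ∉ Submodule.span ℝ {r} := by
    intro h
    refine hyr ?_
    have := add_mem h (Submodule.smul_mem _ l (Submodule.mem_span_singleton_self r))
    simpa [hy1] using this
  have hy10 : y1 ≠ 0 := fun h => hy1r (h ▸ zero_mem _)
  have hs0 : s ≠ 0 := by rintro rfl; simp at hsr
  have hsr' : ⟪s, r⟫_ℝ ≠ 0 := by
    intro h; rw [inner_neg_right, h] at hsr; simp at hsr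
  rcases dichotomy hs0 (LSy_le hs) (self_mem_LS S y1) hy10 with h1 | h1
  · exact ⟨y1, ⟨hm, hy10, h1⟩, hy1r⟩
  obtain ⟨v, hv, hvy, hv2⟩ : ∃ v ∈ pl s, v ∉ Submodule.span ℝ {y1} ∧ v 2 ≤ 0 := by
    have hlt : ¬ pl s ≤ Submodule.span ℝ {y1} := by
      intro h
      refine span_ne_pl hs0 (le_antisymm ?_ h)
      rw [← h1]; simpa using self_mem_LS S y1
    obtain ⟨v, hv, hvy⟩ := SetLike.not_le_iff_exists.1 hlt
    rcases le_total (v 2) 0 with h | h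
    · exact ⟨v, hv, hvy, h⟩
    · exact ⟨-v, neg_mem hv, fun h' => hvy (by simpa using neg_mem h'), by simpa using h⟩
  have hv0 : v ≠ 0 := fun h => hvy (h ▸ zero_mem _)
  have hvn : 0 < ‖v‖ := norm_pos_iff.2 hv0
  obtain ⟨M, hM, hbd⟩ := hS.bound
  have hl0' : 0 < (M * y1 2 + ‖y1‖ + 1) / ‖v‖ := by
    have := hS.nonneg hm; positivity
  obtain ⟨l', hl'0, _, hm', s', hs', hs'v⟩ := exit_lemma (z := v)
    (l0 := (M * y1 2 + ‖y1‖ + 1) / ‖v‖) hm hl0' (fun hmem => by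
      have h3 := hbd _ hmem
      have h4 : ‖((M * y1 2 + ‖y1‖ + 1) / ‖v‖) • v‖ = M * y1 2 + ‖y1‖ + 1 := by
        rw [norm_smul, Real.norm_of_nonneg hl0'.le, div_mul_cancel₀ _ hvn.ne']
      have h5 := norm_sub_le (y1 + ((M * y1 2 + ‖y1‖ + 1) / ‖v‖) • v) y1
      rw [add_sub_cancel_left, h4] at h5
      have h6 : (y1 + ((M * y1 2 + ‖y1‖ + 1) / ‖v‖) • v) 2 ≤ y1 2 := by
        simp only [PiLp.add_apply, PiLp.smul_apply, smul_eq_mul]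
        have := mul_nonpos_of_nonneg_of_nonpos hl0'.le hv2
        linarith
      have h7 := mul_le_mul_of_nonneg_left h6 hM.le
      linarith)
  have hne : y1 + l' • v ≠ 0 := by
    intro h
    have hl : l' ≠ 0 := by rintro rfl; simp at h; exact hy10 h
    refine hvy ?_
    have h8 : l' • v ∈ Submodule.span ℝ {y1} := by
      rw [show l' • v = -y1 from (neg_eq_of_add_eq_zero_right h).symm]
      exact neg_mem (Submodule.mem_span_singleton_self _)
    exact (Submodule.smul_mem_iff _ hl).1 h8
  have hle : LS (act S (y1 + l' • v)) ≤ pl s := by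
    rw [← h1]
    exact LS_exit_le (h1 ▸ hv) l'
  rcases dichotomy hs0 hle (self_mem_LS S _) hne with h2 | h2
  · refine ⟨_, ⟨hm', hne, h2⟩, fun h => ?_⟩
    obtain ⟨c, hc⟩ := Submodule.mem_span_singleton.1 h
    have h3 := mem_pl.1 (hle (self_mem_LS S _))
    rw [← hc, inner_smul_right] at h3
    rcases mul_eq_zero.1 h3 with h4 | h4
    · rw [← hc, h4] at hne; simp at hne
    · exact hsr' h4
  · rw [← h2] at hv
    exact absurd (hv s' hs') hs'v.ne'


theorem int_supp {S T : Finset V3} (hS : GC S) (hT : GC T) {f h : V3 → ℝ} (hf : BM f) (hh : BM h)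
    (hf' : ∀ p, f p ≠ 0 → p ∈ cone S) (hh' : ∀ p, h p ≠ 0 → p ∈ cone T) (x : V3) :
    Integrable fun p => f p * h (x - p) := by
  obtain ⟨R0, hR⟩ := supp_bound hS hT hf' hh' x
  have hR := hR.self_of_nhds
  obtain ⟨hm, M, hM⟩ := hf.mul (hh.refl x)
  rw [← integrableOn_iff_integrable_of_support_subset (s := Metric.closedBall 0 R0)]
  · exact Measure.integrableOn_of_bounded (measure_closedBall_lt_top).ne hm.aestronglyMeasurable
      (M := M) (Filter.Eventually.of_forall hM)
  · intro p hp
    rw [mem_closedBall_zero_iff]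
    exact hR p hp

theorem sh_supp {S : Finset V3} {a : V3} (ha : a ∈ cone S) (p : V3)
    (h : ind (cone S) (p - a) ≠ 0) : p ∈ cone S := by
  simpa using cone_add (ind_ne h) ha

theorem fd_supp {S : Finset V3} {κ : ℝ} {a : V3} (ha : a ∈ cone S) (p : V3)
    (h : fd S κ a p ≠ 0) : p ∈ cone S := by
  by_contra hp
  have h2 : p - a ∉ cone S := fun h => hp (by simpa using cone_add h ha)
  exact h (by simp [fd, ind_of_not_mem hp, ind_of_not_mem h2])

theorem W_shift (f h : V3 → ℝ) (a a' x : V3) :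
    W (fun _ => 1) f h (x - a - a') = ∫ p, f (p - a) * h (x - p - a') := by
  unfold W
  rw [← integral_sub_right_eq_self (fun p => 1 * (f p * h (x - a - a' - p))) a]
  congr 1; ext p
  rw [one_mul]
  have : x - a - a' - (p - a) = x - p - a' := by abel
  rw [this]

theorem diff_expand {S T : Finset V3} (hS : GC S) (hT : GC T) {κ κ' : ℝ} {w w' : V3}
    (hw : w ∈ cone S) (hw' : w' ∈ cone T) (x : V3) :
    W (fun _ => 1) (fd S κ w) (fd T κ' w') x =
      W (fun _ => 1) (ind (cone S)) (ind (cone T)) (x - 0 - 0)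
      - κ' * W (fun _ => 1) (ind (cone S)) (ind (cone T)) (x - 0 - w')
      - κ * W (fun _ => 1) (ind (cone S)) (ind (cone T)) (x - w - 0)
      + κ * κ' * W (fun _ => 1) (ind (cone S)) (ind (cone T)) (x - w - w') := by
  have I : ∀ a ∈ cone S, ∀ a' ∈ cone T,
      Integrable fun p => ind (cone S) (p - a) * ind (cone T) (x - p - a') := fun a ha a' ha' =>
    int_supp hS hT (f := fun p => ind (cone S) (p - a)) (h := fun p => ind (cone T) (p - a'))
      ((BM_ind_cone S).shift a) ((BM_ind_cone T).shift a') (sh_supp ha) (sh_supp ha') x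
  have z := zero_mem_cone S
  have z' := zero_mem_cone T
  have J1 : Integrable fun p => ind (cone S) (p - 0) * ind (cone T) (x - p - 0)
      - κ' * (ind (cone S) (p - 0) * ind (cone T) (x - p - w')) :=
    (I 0 z 0 z').sub ((I 0 z w' hw').const_mul _)
  have J2 : Integrable fun p => ind (cone S) (p - 0) * ind (cone T) (x - p - 0)
      - κ' * (ind (cone S) (p - 0) * ind (cone T) (x - p - w'))
      - κ * (ind (cone S) (p - w) * ind (cone T) (x - p - 0)) :=
    J1.sub ((I w hw 0 z').const_mul _)
  rw [W_shift, W_shift, W_shift, W_shift, ← integral_const_mul, ← integral_const_mul,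
    ← integral_const_mul, ← integral_sub (I 0 z 0 z') ((I 0 z w' hw').const_mul _),
    ← integral_sub J1 ((I w hw 0 z').const_mul _), ← integral_add J2 ((I w hw w' hw').const_mul _)]
  unfold W
  congr 1; ext p
  simp only [fd, sub_zero]
  ring

end CC

namespace CC
open scoped InnerProductSpace

theorem sigma_pos {n w0 : V3} (hn : n ≠ 0) {u : V3 → ℝ} (hv : ∀ p, ⟪n, p⟫_ℝ < 0 → u p = 0)
    {ρ : ℝ} (hρ : 0 < ρ) (h : ∀ q ∈ Metric.ball w0 ρ, 1 ≤ u q) : 0 < ⟪n, w0⟫_ℝ := by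
  by_contra hc
  have hnn : 0 < ‖n‖ := norm_pos_iff.2 hn
  have hc0 : 0 < ρ / (2 * ‖n‖) := by positivity
  have h1 := h (w0 - (ρ / (2 * ‖n‖)) • n) (by
    rw [Metric.mem_ball, dist_eq_norm, sub_sub_cancel_left, norm_neg, norm_smul,
      Real.norm_of_nonneg hc0.le]
    have : ρ / (2 * ‖n‖) * ‖n‖ = ρ / 2 := by field_simp
    linarith)
  rw [hv _ ?_] at h1
  · norm_num at h1
  · rw [inner_sub_right, inner_smul_right, real_inner_self_eq_norm_sq]
    have : 0 < ρ / (2 * ‖n‖) * ‖n‖ ^ 2 := by positivity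
    linarith

theorem low_bound {u u' φ : V3 → ℝ} {y0 z0 x0 w0 v0 : V3} {R ρ ρ' : ℝ} (hx : y0 + z0 = x0)
    (hu : BM u) (hu' : BM u') (hnn : ∀ p, 0 ≤ u p) (hnn' : ∀ p, 0 ≤ u' p)
    (hi : ∀ p, u (p + y0) = u p) (hi' : ∀ p, u' (p + z0) = u' p)
    (hs : ∀ s : ℝ, 0 < s → ∀ q, u (s • q) = u q) (hs' : ∀ s : ℝ, 0 < s → ∀ q, u' (s • q) = u' q)
    (hρ : 0 < ρ) (hρ' : 0 < ρ') (hb : ∀ q ∈ Metric.ball w0 ρ, 1 ≤ u q)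
    (hb' : ∀ q ∈ Metric.ball v0 ρ', 1 ≤ u' q) (hφ : Continuous φ) (hφs : HasCompactSupport φ)
    (hφ0 : ∀ p, 0 ≤ φ p) (hR : 0 < R) (hφ1 : ∀ p ∈ Metric.closedBall y0 R, φ p = 1) :
    ∃ c > 0, ∃ η > 0, ∀ s : ℝ, 0 < s → s < η → c * s ^ 3 ≤ W φ u u' (x0 + s • (w0 + v0)) := by
  set ρ1 := min ρ ρ' with hρ1
  have hp1 : 0 < ρ1 := lt_min hρ hρ'
  have hvol : 0 < volume.real (Metric.ball (0 : V3) ρ1) :=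
    ENNReal.toReal_pos (Metric.measure_ball_pos _ _ hp1).ne' measure_ball_lt_top.ne
  refine ⟨_, hvol, R / (‖w0‖ + ρ1), by positivity, fun s h0 hη => ?_⟩
  have hRs : s * (‖w0‖ + ρ1) < R := by
    rwa [lt_div_iff₀ (by positivity)] at hη
  have e1 : volume.real (Metric.ball (0 : V3) ρ1) * s ^ 3
      = volume.real (Metric.ball (y0 + s • w0) (s * ρ1)) := by
    unfold Measure.real
    rw [Measure.addHaar_ball_mul_of_pos _ _ h0, ENNReal.toReal_mul, ENNReal.toReal_ofReal (by positivity)]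
    simp
    ring
  rw [e1, ← integral_indicator_one Metric.isOpen_ball.measurableSet]
  unfold W
  refine integral_mono ?_ (W_integrable hφ hφs hu hu' _) ?_
  · exact (integrable_indicator_iff Metric.isOpen_ball.measurableSet).2
      (integrableOn_const measure_ball_lt_top.ne)
  · intro p
    by_cases hp : p ∈ Metric.ball (y0 + s • w0) (s * ρ1)
    · simp only [Set.indicator_of_mem hp, Pi.one_apply]
      rw [Metric.mem_ball, dist_eq_norm] at hp
      set q := s⁻¹ • (p - y0) with hq
      have hsq : s • q = p - y0 := by rw [hq, smul_inv_smul₀ h0.ne']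
      have hqw : ‖q - w0‖ < ρ1 := by
        have : s * ‖q - w0‖ < s * ρ1 := by
          have h : ‖s • (q - w0)‖ = s * ‖q - w0‖ := by
            rw [norm_smul, Real.norm_of_nonneg h0.le]
          rw [← h, smul_sub, hsq, sub_sub]
          exact hp
        exact lt_of_mul_lt_mul_left this h0.le
      have a1 : 1 ≤ u p := by
        have : u p = u q := by
          rw [← hs s h0 q, hsq, ← hi (p - y0), sub_add_cancel]
        rw [this]
        exact hb q (by rw [Metric.mem_ball, dist_eq_norm]; exact hqw.trans_le (min_le_left _ _))
      have a2 : 1 ≤ u' (x0 + s • (w0 + v0) - p) := by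
        have : u' (x0 + s • (w0 + v0) - p) = u' (w0 + v0 - q) := by
          rw [← hs' s h0 (w0 + v0 - q), ← hi' (s • (w0 + v0 - q)), smul_sub, hsq, ← hx]
          congr 1; abel
        rw [this]
        refine hb' _ ?_
        rw [Metric.mem_ball, dist_eq_norm]
        have : w0 + v0 - q - v0 = -(q - w0) := by abel
        rw [this, norm_neg]
        exact hqw.trans_le (min_le_right _ _)
      have a3 : φ p = 1 := by
        refine hφ1 p ?_
        rw [Metric.mem_closedBall, dist_eq_norm, ← hsq, norm_smul, Real.norm_of_nonneg h0.le]
        refine le_trans (mul_le_mul_of_nonneg_left ?_ h0.le) hRs.le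
        calc ‖q‖ = ‖w0 + (q - w0)‖ := by congr 1; abel
          _ ≤ ‖w0‖ + ‖q - w0‖ := norm_add_le _ _
          _ ≤ _ := by linarith
      rw [a3, one_mul]
      nlinarith
    · simp only [Set.indicator_of_notMem hp]
      exact mul_nonneg (hφ0 p) (mul_nonneg (hnn p) (hnn' _))

theorem W_add_one {S T : Finset V3} (hS : GC S) (hT : GC T) {f h φ : V3 → ℝ} (hf : BM f)
    (hh : BM h) (hf' : ∀ p, f p ≠ 0 → p ∈ cone S) (hh' : ∀ p, h p ≠ 0 → p ∈ cone T)
    (hφ : Continuous φ) (hs : HasCompactSupport φ) (x : V3) :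
    W (fun _ => 1) f h x = W φ f h x + W (fun p => 1 - φ p) f h x := by
  have i0 := int_supp hS hT hf hh hf' hh' x
  have i1 := W_integrable hφ hs hf hh x
  have i2 : Integrable fun p => (1 - φ p) * (f p * h (x - p)) := by
    convert i0.sub i1 using 1
    ext p; simp; ring
  unfold W
  rw [← integral_add i1 i2]
  congr 1; ext p; ring

theorem core {S T : Finset V3} (hS : GC S) (hT : GC T) {r t n : V3} (hr : EdgeVec S r)
    (ht : EdgeVec T t) (hn : n ≠ 0) (hrn : r ∈ pl n) (htn : t ∈ pl n)
    (hx : ∀ q : V3, ⟪q, r⟫_ℝ = 0 → ⟪q, t⟫_ℝ = 0 → pl n ≤ pl q) {ρ τ : ℝ} (hρ : 0 ≤ ρ) (hτ : 0 ≤ τ)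
    (hC : ContDiffAt ℝ 3 (W (fun _ => 1) (ind (cone S)) (ind (cone T))) (ρ • r + τ • t)) : False := by
  set g := W (fun _ => 1) (ind (cone S)) (ind (cone T)) with hg
  have hxn : ρ • r + τ • t ∈ pl n :=
    add_mem (Submodule.smul_mem _ _ hrn) (Submodule.smul_mem _ _ htn)
  have hev := (hC.eventually (by simp)).eventually_nhds
  have hcont : Continuous fun a : ℝ => ρ • r + τ • t + a • r + a ^ 2 • t := by fun_prop
  have hev' := (hcont.tendsto' 0 (ρ • r + τ • t) (by simp)).eventually hev
  obtain ⟨a, ⟨⟨δ, G⟩, hga⟩, ha⟩ := (((generic S T hrn htn hx hxn).and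
    (nhdsWithin_le_nhds hev')).and self_mem_nhdsWithin).exists
  have ha : 0 < a := ha
  set x0 := ρ • r + τ • t + a • r + a ^ 2 • t with hx0
  obtain ⟨η, hη, hgη⟩ := Metric.eventually_nhds_iff.1 hga
  have hm : 0 < min (δ / 2) (η / 2) := lt_min (half_pos G.pos) (half_pos hη)
  obtain ⟨κ, ε, w, hw, H⟩ := TOut_ex hS hn hm
  obtain ⟨κ', ε', w', hw', H'⟩ := TOut_ex hT hn hm
  have hw1 := hw.trans_le (min_le_left _ _)
  have hw2 := hw.trans_le (min_le_right _ _)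
  have hw1' := hw'.trans_le (min_le_left _ _)
  have hw2' := hw'.trans_le (min_le_right _ _)
  -- smoothness of the difference
  have hsm : ∀ b b' : V3, ‖b‖ < η / 2 → ‖b'‖ < η / 2 → ContDiffAt ℝ 3 (fun x => g (x - b - b')) x0 := by
    intro b b' hb hb'
    have h1 : ContDiffAt ℝ 3 g (x0 - b - b') := by
      refine hgη ?_
      rw [dist_eq_norm]
      have : x0 - b - b' - x0 = -(b + b') := by abel
      rw [this, norm_neg]
      linarith [norm_add_le b b']
    exact ContDiffAt.comp (g := g) (f := fun x => x - b - b') x0 h1 (by fun_prop)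
  have z : ‖(0 : V3)‖ < η / 2 := by simpa using hη
  have hΔ : ContDiffAt ℝ 3 (W (fun _ => 1) (fd S κ w) (fd T κ' w')) x0 := by
    have h1 : ContDiffAt ℝ 3 (fun x => g (x - 0 - 0) - κ' * g (x - 0 - w') - κ * g (x - w - 0)
        + κ * κ' * g (x - w - w')) x0 :=
      (((hsm 0 0 z z).sub (contDiffAt_const.mul (hsm 0 w' z hw2'))).sub
        (contDiffAt_const.mul (hsm w 0 hw2 z))).add (contDiffAt_const.mul (hsm w w' hw2 hw2'))
    convert h1 using 1
    ext x
    exact diff_expand hS hT H.wc H'.wc x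
  have hp1 : 0 < ρ + a := by linarith
  have hp2 : 0 < τ + a ^ 2 := by positivity
  set y0 := (ρ + a) • r with hy0
  set z0 := (τ + a ^ 2) • t with hz0
  have hyz : y0 + z0 = x0 := by rw [hy0, hz0, hx0, add_smul, add_smul]; abel
  have hy0n : y0 ∈ pl n := Submodule.smul_mem _ _ hrn
  have hz0n : z0 ∈ pl n := Submodule.smul_mem _ _ htn
  obtain ⟨u, hu, hus, w0, ρ0, hρ0, hub⟩ := H.st y0 hy0n (hr.smul hp1)
  obtain ⟨u', hu', hus', v0, ρ0', hρ0', hub'⟩ := H'.st z0 hz0n (ht.smul hp2)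
  have hLL : pl n ≤ (LS (act S y0) ⊓ pl n) ⊔ (LS (act T z0) ⊓ pl n) := by
    refine G.g2 _ (act_sub S _) _ (act_sub T _) 0 (by simpa using G.pos) ?_
    rw [sub_zero, ← hyz]
    exact Submodule.add_mem_sup ⟨self_mem_LS S _, hy0n⟩ ⟨self_mem_LS T _, hz0n⟩
  obtain ⟨δ1, hδ1, hfp⟩ := flip_pair hn hyz hu hu' hLL
  let φ : ContDiffBump y0 := ⟨δ1 / 4, δ1 / 2, by positivity, by linarith⟩
  have hφ3 : ContDiff ℝ 3 φ := φ.contDiff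
  have hφs : HasCompactSupport φ := φ.hasCompactSupport
  have f1 := hfp φ hφ3 (fun p => φ.nonneg) (by
    rw [φ.tsupport_eq]
    exact Metric.closedBall_subset_ball (show δ1 / 2 < δ1 by linarith))
  obtain ⟨R0, hR0⟩ := supp_bound hS hT (f := fd S κ w) (h := fd T κ' w') (fd_supp H.wc)
    (fd_supp H'.wc) x0
  obtain ⟨G1, hG0, hGv, f2⟩ := glue (Cls_CG (ε * ε') (fun x => ⟪n, x⟫_ℝ) x0) (BM_fd S κ w)
    (BM_fd T κ' w') R0 hR0 (fun y => pair_loc hS hT hn G H H' hw1 hw1' (z := x0 - y) (by abel))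
    (fun p => 1 - φ p) (contDiff_const.sub hφ3) (fun p => sub_nonneg.2 φ.le_one)
  have hee : (ε * ε') * (ε * ε') = 1 := by
    rcases H.sg with h | h <;> rcases H'.sg with h' | h' <;> rw [h, h'] <;> norm_num
  have hGt : ContDiffAt ℝ 3 (fun x => G1 x + W φ u u' x) x0 := by
    have h1 := (contDiffAt_const (c := ε * ε')).mul ((hΔ.sub f1).sub f2)
    refine h1.congr_of_eventuallyEq (Filter.Eventually.of_forall fun x => ?_)
    have e := W_add_one hS hT (BM_fd S κ w) (BM_fd T κ' w') (fd_supp H.wc) (fd_supp H'.wc)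
      hφ3.continuous hφs x
    simp only [e]
    linear_combination (-(G1 x + W φ u u' x)) * hee
  have hσw := sigma_pos hn hu.van hρ0 hub
  have hσv := sigma_pos hn hu'.van hρ0' hub'
  obtain ⟨c, hc, η1, hη1, hlow⟩ := low_bound (R := δ1 / 4) hyz hu.bm hu'.bm hu.nn hu'.nn
    (fun p => hu.inv p y0 ⟨self_mem_LS S _, hy0n⟩) (fun p => hu'.inv p z0 ⟨self_mem_LS T _, hz0n⟩)
    hus hus' hρ0 hρ0' hub hub' hφ3.continuous hφs (fun p => φ.nonneg) (by positivity)
    (fun p hp => φ.one_of_mem_closedBall hp)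
  refine flat_contra (ψ := fun s => G1 (x0 + s • (w0 + v0)) + W φ u u' (x0 + s • (w0 + v0))) ?_ ?_
    hc hη1 (fun s h1 h2 => ?_)
  · have h1 : ContDiffAt ℝ 3 (fun x => G1 x + W φ u u' x) (x0 + (0 : ℝ) • (w0 + v0)) := by
      simpa using hGt
    exact ContDiffAt.comp (g := fun x => G1 x + W φ u u' x) (f := fun s : ℝ => x0 + s • (w0 + v0))
      0 h1 (by fun_prop)
  · intro s hs
    have hneg : ⟪n, x0 + s • (w0 + v0)⟫_ℝ < 0 := by
      rw [inner_add_right n x0 (s • (w0 + v0)), mem_pl.1 G.mem, inner_smul_right,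
        inner_add_right]
      nlinarith
    rw [hGv _ hneg, W_van hu.van hu'.van _ hneg, add_zero]
  · linarith [hlow s h1 h2, hG0 (x0 + s • (w0 + v0))]

theorem core' {S T : Finset V3} (hS : GC S) (hT : GC T) {r t : V3} (hr : EdgeVec S r)
    (ht : EdgeVec T t) (hi : t ∉ Submodule.span ℝ {r}) {ρ τ : ℝ} (hρ : 0 ≤ ρ) (hτ : 0 ≤ τ) :
    ¬ ContDiffAt ℝ 3 (W (fun _ => 1) (ind (cone S)) (ind (cone T))) (ρ • r + τ • t) := by
  intro hC
  have hne : Submodule.span ℝ {r, t} ≠ ⊤ := by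
    intro h
    have h1 := finrank_span_finset_le_card (R := ℝ) ({r, t} : Finset V3)
    have h2 : ({r, t} : Finset V3).card ≤ 2 := Finset.card_le_two
    rw [Finset.coe_pair, Set.finrank, h, finrank_top] at h1
    simp only [finrank_euclideanSpace, Fintype.card_fin] at h1
    omega
  obtain ⟨n, hn, hle⟩ := exists_normal hne
  have hrm : r ∈ Submodule.span ℝ {r, t} := Submodule.subset_span (by simp)
  have htm : t ∈ Submodule.span ℝ {r, t} := Submodule.subset_span (by simp)
  have hpl : Submodule.span ℝ {r, t} = pl n := by
    rcases dichotomy hn hle hrm hr.2.1 with h | h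
    · exact absurd (h ▸ htm) hi
    · exact h
  refine core hS hT hr ht hn (hle hrm) (hle htm) (fun q h1 h2 => ?_) hρ hτ hC
  rw [← hpl, Submodule.span_le]
  rintro v (rfl | rfl)
  · exact mem_pl.2 h1
  · exact mem_pl.2 h2

theorem inner_claim : InnerClaim := by
  intro S T hS hT r t hr ht ρ τ hρ hτ
  by_cases hi : t ∈ Submodule.span ℝ {r}
  · obtain ⟨c, hc⟩ := Submodule.mem_span_singleton.1 hi
    have hr2 : 0 < r 2 := hS.pos r hr.1 hr.2.1
    have ht2 : 0 < t 2 := hT.pos t ht.1 ht.2.1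
    have hcp : 0 < c := by
      rw [← hc] at ht2
      simp at ht2
      exact (pos_iff_pos_of_mul_pos ht2).2 hr2
    obtain ⟨r2, he, hn⟩ := second_edge hS hr
    have hx : ρ • r + τ • t = (0 : ℝ) • r2 + (ρ / c + τ) • t := by
      rw [zero_smul, zero_add, add_smul, ← hc, smul_smul, smul_smul,
        div_mul_cancel₀ _ hcp.ne']
    rw [hx]
    refine core' hS hT he ht (fun h => hn ?_) le_rfl (by positivity)
    obtain ⟨d, hd⟩ := Submodule.mem_span_singleton.1 h
    have hd0 : d ≠ 0 := by
      rintro rfl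
      rw [zero_smul] at hd
      exact ht.2.1 hd.symm
    rw [Submodule.mem_span_singleton]
    exact ⟨d⁻¹ * c, by rw [mul_smul, hc, ← hd, inv_smul_smul₀ hd0]⟩
  · exact core' hS hT hr ht hi hρ hτ

end CC

/-- The set of `C³`-discontinuities of the cross covariogram of two convex polyhedral
cones `A`, `B` contains the Minkowski sums of the edges of `A` and of `−B`, and is
contained in the union of `∂A`, `−∂B` and these Minkowski sums. -/
theorem C3_discontinuities_of_crossCovariogram
    (A B : Set (EuclideanSpace ℝ (Fin 3)))
    (hA : IsPolyhedralCone A) (hB : IsPolyhedralCone B)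
    (hAint : (interior A).Nonempty) (hBint : (interior B).Nonempty)
    (hAup : A ⊆ {x | 0 ≤ x 2}) (hBdown : -B ⊆ {x | 0 ≤ x 2})
    (hA0 : A ∩ {x | x 2 = 0} = {0}) (hB0 : B ∩ {x | x 2 = 0} = {0})
    (S3 E : Set (EuclideanSpace ℝ (Fin 3)))
    (hS3 : S3 = closure {x | ¬IsC3At (crossCovariogram A B) x})
    (hE : E = {x | ∃ R T : Set (EuclideanSpace ℝ (Fin 3)),
      IsEdgeOf A R ∧ IsEdgeOf (-B) T ∧ x ∈ R + T}) :
    E ⊆ S3 ∧ S3 ⊆ frontier A ∪ (-frontier B) ∪ E := by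
  exact CC.main_of CC.inner_claim A B hA hB hAint hBint hAup hBdown hA0 hB0 S3 E hS3 hE
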